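/- arXiv:1910.08064 — 4 statements merged into one kernel-verified Lean document; each statement's English description precedes it below -/
import Mathlib

section
/- Let N ≥ 1 and let λ be a partition with at most N parts, padded with zeros to length N. Then for any ℓ ≥ λ₁, the following identity of polynomials in ℤ[x₁, …, x_N] holds: det( (x_i^{λ_j + N − j})_{1≤i,j≤N} ) = det( (x_i^{N−j})_{1≤i,j≤N} ) · det( (e_{λ'_i − i + j}(x₁, …, x_N))_{1≤i,j≤ℓ} ), i.e. the Schur polynomial s_λ equals the dual Jacobi–Trudi determinant in elementary symmetric polynomials. -/
open MvPolynomial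

/-- The conjugate partition, with 1-based index: `conjugatePart l i = #{ j : l_j ≥ i }`,
where `l : ℕ → ℕ` lists the parts 0-based (`l 0 = λ₁`). -/
noncomputable def conjugatePart (l : ℕ → ℕ) (i : ℕ) : ℕ :=
  Set.ncard {j : ℕ | i ≤ l j}

/-- The elementary symmetric polynomial in `N` variables with an integer index:
`e_k` for `k ≥ 0` (which is `0` for `k > N`), and `0` for `k < 0`. -/
noncomputable def eInt (N : ℕ) (k : ℤ) : MvPolynomial (Fin N) ℤ :=
  if 0 ≤ k then MvPolynomial.esymm (Fin N) ℤ k.toNat else 0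

section DualJacobiTrudi

/-- The position of an index of a block decomposition of `N + ℓ`. -/
def blockPos {N ℓ : ℕ} (r : Fin N ⊕ Fin ℓ) : ℕ := (finSumFinEquiv r : ℕ)

lemma blockPos_inl {N ℓ : ℕ} (j : Fin N) :
    blockPos (Sum.inl j : Fin N ⊕ Fin ℓ) = j := by simp [blockPos]

lemma blockPos_inr {N ℓ : ℕ} (i : Fin ℓ) :
    blockPos (Sum.inr i : Fin N ⊕ Fin ℓ) = N + i := by simp [blockPos]

lemma sum_blockPos {N ℓ : ℕ} {R : Type*} [AddCommMonoid R] (f : ℕ → R) :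
    ∑ r : Fin N ⊕ Fin ℓ, f (blockPos r) = ∑ k ∈ Finset.range (N + ℓ), f k := by
  rw [← Fin.sum_univ_eq_sum_range]
  exact finSumFinEquiv.sum_comp (fun k : Fin (N + ℓ) => f k)

/-- A generalized Vandermonde determinant at roots of a monic polynomial `Q` is the Vandermonde
determinant times the complementary minor of the matrix of coefficients of `Q`, up to sign. -/
lemma det_pow_blockPos {R : Type*} [CommRing R] {N ℓ : ℕ} (y : Fin N → R)
    (Q : Polynomial R) (hQ : Q.Monic) (hdeg : Q.natDegree = N) (hroot : ∀ i, Q.eval (y i) = 0)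
    (σ : Equiv.Perm (Fin N ⊕ Fin ℓ)) :
    (Matrix.of fun i j : Fin N => y i ^ blockPos (σ (Sum.inl j))).det =
      (Matrix.of fun i j : Fin N => y i ^ (j : ℕ)).det *
        ((Equiv.Perm.sign σ : ℤ) *
          (Matrix.of fun i j : Fin ℓ =>
            (Q * Polynomial.X ^ (j : ℕ)).coeff (blockPos (σ (Sum.inr i)))).det) := by
  classical
  let V : Matrix (Fin N) (Fin N) R := Matrix.of fun i j => y i ^ (j : ℕ)
  let W : Matrix (Fin N) (Fin ℓ) R := Matrix.of fun i j => y i ^ (N + (j : ℕ))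
  let L : Matrix (Fin N ⊕ Fin ℓ) (Fin N ⊕ Fin ℓ) R := Matrix.fromBlocks V W 0 1
  let C : Matrix (Fin N ⊕ Fin ℓ) (Fin N ⊕ Fin ℓ) R := Matrix.of fun r c =>
    Sum.elim (fun c' => if r = σ (Sum.inl c') then 1 else 0)
      (fun j => (Q * Polynomial.X ^ (j : ℕ)).coeff (blockPos r)) c
  let U : Matrix (Fin ℓ) (Fin ℓ) R := Matrix.of fun k j =>
    (Q * Polynomial.X ^ (j : ℕ)).coeff (N + (k : ℕ))
  let Z : Matrix (Fin ℓ) (Fin N) R := Matrix.of fun k c =>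
    if Sum.inr k = σ (Sum.inl c) then 1 else 0
  have hLinl : ∀ i r, L (Sum.inl i) r = y i ^ blockPos r := by
    rintro i (r | r) <;> simp [L, V, W, blockPos_inl, blockPos_inr]
  have hLC : L * C = Matrix.fromBlocks
      (Matrix.of fun i j : Fin N => y i ^ blockPos (σ (Sum.inl j))) 0 Z U := by
    ext (i | i) (j | j)
    · simp [Matrix.mul_apply, hLinl, C, -Fintype.sum_sum_type]
    · rw [Matrix.mul_apply]
      simp only [hLinl, C, Matrix.of_apply, Sum.elim_inr, Matrix.fromBlocks_apply₁₂,
        Matrix.zero_apply]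
      refine (sum_blockPos fun k => y i ^ k * (Q * Polynomial.X ^ (j : ℕ)).coeff k).trans ?_
      have hlt : (Q * Polynomial.X ^ (j : ℕ)).natDegree < N + ℓ := by
        refine lt_of_le_of_lt Polynomial.natDegree_mul_le ?_
        have := Polynomial.natDegree_X_pow_le (R := R) (j : ℕ)
        omega
      have := Polynomial.eval_eq_sum_range' hlt (y i)
      rw [Polynomial.eval_mul, hroot, zero_mul] at this
      rw [this]
      exact Finset.sum_congr rfl fun _ _ => mul_comm _ _
    · simp only [Matrix.mul_apply, C, Z, Matrix.of_apply, Sum.elim_inl, mul_ite, mul_one, mul_zero,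
        Finset.sum_ite_eq', Finset.mem_univ, if_true, Matrix.fromBlocks_apply₂₁]
      generalize σ (Sum.inl j) = r
      rcases r with r | r <;> simp [L, Matrix.one_apply]
    · simp [Matrix.mul_apply, L, C, U, Matrix.one_apply, blockPos_inr]
  have hU : U.det = 1 := by
    rw [Matrix.det_of_isUpperTriangular]
    · refine Finset.prod_eq_one fun k _ => ?_
      have : Q.coeff N = 1 := by rw [← hdeg]; exact hQ
      simp [U, Polynomial.coeff_mul_X_pow, this]
    · intro k j hkj
      have hkj' : (j : ℕ) < k := hkj
      simp only [U, Matrix.of_apply, Polynomial.coeff_mul_X_pow']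
      rw [if_pos (by omega)]
      exact Polynomial.coeff_eq_zero_of_natDegree_lt (by omega)
  have hCσ : C.submatrix σ id = Matrix.fromBlocks 1
      (Matrix.of fun (i : Fin N) (j : Fin ℓ) =>
        (Q * Polynomial.X ^ (j : ℕ)).coeff (blockPos (σ (Sum.inl i)))) 0
      (Matrix.of fun i j : Fin ℓ =>
        (Q * Polynomial.X ^ (j : ℕ)).coeff (blockPos (σ (Sum.inr i)))) := by
    ext (i | i) (j | j) <;> simp [C, Matrix.one_apply]
  have hdetC := Matrix.det_permute σ C
  rw [hCσ, Matrix.det_fromBlocks_zero₂₁, Matrix.det_one, one_mul] at hdetC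
  have hdet := congrArg Matrix.det hLC
  rw [Matrix.det_mul, Matrix.det_fromBlocks_zero₁₂, hU, mul_one,
    Matrix.det_fromBlocks_zero₂₁, Matrix.det_one, mul_one] at hdet
  rw [← hdet, hdetC, ← mul_assoc (((Equiv.Perm.sign σ : ℤ)) : R), ← Int.cast_mul,
    ← Units.val_mul, Int.units_mul_self]
  simp [V]

lemma lt_conjugatePart_iff {l : ℕ → ℕ} (hl : Antitone l) {N : ℕ} (hN : l N = 0)
    (i j : ℕ) : j < conjugatePart l (i + 1) ↔ i < l j := by
  classical
  have hex : ∃ m, l m ≤ i := ⟨N, by omega⟩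
  have key : ∀ k, k < Nat.find hex ↔ i < l k := by
    intro k
    refine ⟨fun h => not_le.mp (Nat.find_min hex h), fun h => ?_⟩
    by_contra! hk
    exact absurd ((hl hk).trans (Nat.find_spec hex)) (by omega)
  have hset : {k : ℕ | i + 1 ≤ l k} = ((Finset.range (Nat.find hex) : Finset ℕ) : Set ℕ) := by
    ext k
    simp [key]
  rw [conjugatePart, hset, Set.ncard_coe_finset, Finset.card_range, key]

lemma conjugatePart_le {l : ℕ → ℕ} (hl : Antitone l) {N : ℕ} (hN : l N = 0) (i : ℕ) :
    conjugatePart l (i + 1) ≤ N := by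
  by_contra! h
  have := (lt_conjugatePart_iff hl hN i N).1 h
  omega

lemma natDegree_prod_X_add_C {R : Type*} [CommRing R] [Nontrivial R] {N : ℕ}
    (y : Fin N → R) : (∏ k, (Polynomial.X + Polynomial.C (y k))).natDegree = N := by
  rw [Polynomial.natDegree_prod_of_monic _ _ fun k _ => Polynomial.monic_X_add_C _]
  simp

lemma eInt_eq_coeff (N i j c : ℕ) (hc : c ≤ N) :
    eInt N ((c : ℤ) - i + j) =
      ((∏ k : Fin N, (Polynomial.X + Polynomial.C (X k : MvPolynomial (Fin N) ℤ))) *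
        Polynomial.X ^ j).coeff (N + i - c) := by
  have hdeg := natDegree_prod_X_add_C fun k : Fin N => (X k : MvPolynomial (Fin N) ℤ)
  rw [Polynomial.coeff_mul_X_pow', eInt]
  split_ifs with h₁ h₂ h₂
  · rw [MvPolynomial.prod_X_add_C_coeff _ _ _ (by simp; omega)]
    congr 1
    simp
    omega
  · rw [MvPolynomial.esymm, Finset.powersetCard_eq_empty.mpr, Finset.sum_empty]
    simp
    omega
  · exact (Polynomial.coeff_eq_zero_of_natDegree_lt (by omega)).symm
  · rfl

/-- The permutation sending the block indices to the positions of the vertical and horizontal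
steps of the boundary of a partition has sign `(-1) ^ |λ|`. -/
lemma exists_perm_blockPos {N ℓ : ℕ} {lam : ℕ → ℕ} (hanti : Antitone lam)
    (hlen : lam N = 0) (hℓ : lam 0 ≤ ℓ) :
    ∃ σ : Equiv.Perm (Fin N ⊕ Fin ℓ),
      (∀ j : Fin N, blockPos (σ (Sum.inl j)) = lam (j.rev : ℕ) + j) ∧
      (∀ i : Fin ℓ, blockPos (σ (Sum.inr i)) = N + i - conjugatePart lam (i + 1)) ∧
      (Equiv.Perm.sign σ : ℤ) = ∏ j : Fin N, (-1) ^ lam (j : ℕ) := by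
  classical
  have hconj := lt_conjugatePart_iff hanti hlen
  have hcN := conjugatePart_le hanti hlen
  have hcanti : ∀ i i', i ≤ i' → conjugatePart lam (i' + 1) ≤ conjugatePart lam (i + 1) := by
    intro i i' h
    by_contra! hlt
    have h₁ := (hconj i' _).1 hlt
    have h₂ := (hconj i (conjugatePart lam (i + 1))).not.1 (lt_irrefl _)
    omega
  have hle : ∀ j, lam j ≤ ℓ := fun j => (hanti (Nat.zero_le j)).trans hℓ
  let g : Fin N ⊕ Fin ℓ → Fin (N + ℓ) := Sum.elim
    (fun j => ⟨lam (j.rev : ℕ) + j, by have := hle (j.rev : ℕ); omega⟩)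
    (fun i => ⟨N + i - conjugatePart lam (i + 1), by omega⟩)
  have hinl : ∀ j j' : Fin N, g (Sum.inl j) < g (Sum.inl j') ↔ j < j' := by
    have hmono : StrictMono fun j : Fin N => g (Sum.inl j) := by
      intro j j' h
      have := hanti (show (j'.rev : ℕ) ≤ j.rev by simp [Fin.val_rev]; omega)
      simp only [g, Sum.elim_inl, Fin.mk_lt_mk]
      omega
    exact fun j j' => hmono.lt_iff_lt
  have hinr : ∀ i i' : Fin ℓ, g (Sum.inr i) < g (Sum.inr i') ↔ i < i' := by
    have hmono : StrictMono fun i : Fin ℓ => g (Sum.inr i) := by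
      intro i i' h
      have := hcanti i i' h.le
      have := hcN i
      simp only [g, Sum.elim_inr, Fin.mk_lt_mk]
      omega
    exact fun i i' => hmono.lt_iff_lt
  have hcross : ∀ (j : Fin N) (i : Fin ℓ),
      ((i : ℕ) < lam (j.rev : ℕ) ∧ g (Sum.inr i) < g (Sum.inl j)) ∨
      (lam (j.rev : ℕ) ≤ i ∧ g (Sum.inl j) < g (Sum.inr i)) := by
    intro j i
    have h := hconj i (j.rev : ℕ)
    have := hcN i
    have hr : (j.rev : ℕ) = N - (j + 1) := Fin.val_rev j
    simp only [g, Sum.elim_inr, Sum.elim_inl, Fin.mk_lt_mk]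
    omega
  have hinj : Function.Injective g := by
    rintro (j | i) (j' | i') h
    · have h₁ := hinl j j'
      have h₂ := hinl j' j
      rw [h] at h₁ h₂
      congr 1
      simp at h₁ h₂
      omega
    · rcases hcross j i' with ⟨_, h'⟩ | ⟨_, h'⟩ <;> exact absurd h (by simp [h'.ne, h'.ne'])
    · rcases hcross j' i with ⟨_, h'⟩ | ⟨_, h'⟩ <;> exact absurd h (by simp [h'.ne, h'.ne'])
    · have h₁ := hinr i i'
      have h₂ := hinr i' i
      rw [h] at h₁ h₂
      congr 1
      simp at h₁ h₂
      omega
  let e : Fin N ⊕ Fin ℓ ≃ Fin (N + ℓ) :=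
    Equiv.ofBijective g ((Fintype.bijective_iff_injective_and_card g).2 ⟨hinj, by simp⟩)
  have he : ∀ r, e r = g r := fun r => rfl
  refine ⟨e.trans finSumFinEquiv.symm, fun j => ?_, fun i => ?_, ?_⟩
  · simp [blockPos, he, g]
  · simp [blockPos, he, g]
  · have hsign : Equiv.Perm.sign (e.trans finSumFinEquiv.symm) =
        Equiv.Perm.sign (finSumFinEquiv.symm.trans e) := by
      rw [← Equiv.Perm.sign_permCongr finSumFinEquiv]
      congr 1
      ext r
      simp [Equiv.permCongr_apply]
    rw [hsign, Equiv.Perm.sign_eq_prod_prod_Iio]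
    have hIio : ∀ b : Fin (N + ℓ), Finset.Iio b = Finset.univ.filter (· < b) := fun b => by
      ext
      simp
    simp only [hIio, Finset.prod_filter]
    simp only [← finSumFinEquiv.prod_comp, Fintype.prod_sum_type, Equiv.trans_apply,
      Equiv.symm_apply_apply, he, hinl, hinr]
    have hll : ∀ j j' : Fin N, (finSumFinEquiv (Sum.inl j) : Fin (N + ℓ)) <
        finSumFinEquiv (Sum.inl j') ↔ j < j' := fun _ _ => Iff.rfl
    have hrr : ∀ i i' : Fin ℓ, (finSumFinEquiv (Sum.inr i) : Fin (N + ℓ)) <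
        finSumFinEquiv (Sum.inr i') ↔ i < i' := fun i i' => by simp
    have hlr : ∀ (j : Fin N) (i : Fin ℓ), (finSumFinEquiv (Sum.inl j) : Fin (N + ℓ)) <
        finSumFinEquiv (Sum.inr i) := fun j i => by
      simp [Fin.lt_def]
      omega
    have hterm : ∀ (j : Fin N) (i : Fin ℓ), (if g (Sum.inl j) < g (Sum.inr i) then (1 : ℤˣ) else -1)
        = if (i : ℕ) < lam (j.rev : ℕ) then -1 else 1 := fun j i => by
      rcases hcross j i with ⟨h₁, h₂⟩ | ⟨h₁, h₂⟩
      · rw [if_neg h₂.not_gt, if_pos h₁]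
      · rw [if_pos h₂, if_neg h₁.not_gt]
    have hone : ∀ (p : Prop) [Decidable p],
        (if p then (if p then (1 : ℤˣ) else -1) else 1) = 1 := fun p _ => by
      split_ifs <;> rfl
    have hcount : ∀ j : Fin N, (∏ i : Fin ℓ, if (i : ℕ) < lam (j.rev : ℕ) then (-1 : ℤˣ) else 1) =
        (-1) ^ lam (j.rev : ℕ) := fun j => by
      rw [Finset.prod_ite, Finset.prod_const_one, mul_one, Finset.prod_const,
        Fin.card_filter_val_lt, min_eq_right (hle _)]
    simp only [hll, hrr, hlr, (hlr _ _).not_gt, if_true, if_false, hone, hterm,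
      Finset.prod_const_one, one_mul, mul_one]
    rw [Finset.prod_comm]
    simp only [hcount]
    push_cast
    exact Equiv.prod_comp Fin.revPerm fun j : Fin N => (-1 : ℤ) ^ lam (j : ℕ)

end DualJacobiTrudi

/-- For `N ≥ 1`, a partition `λ` with at most `N` parts (padded with zeros
to length `N`, written 0-based), and any `ℓ ≥ λ₁`:
`det((x_i^{λ_j + N - j})_{1≤i,j≤N}) = det((x_i^{N-j})_{1≤i,j≤N}) · det((e_{λ'_i - i + j})_{1≤i,j≤ℓ})`,
i.e. the Schur polynomial `s_λ` equals the dual Jacobi–Trudi determinant in elementary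
symmetric polynomials. -/
theorem statement2 (N : ℕ) (hN : 1 ≤ N) (lam : ℕ → ℕ)
    (hlam_anti : Antitone lam) (hlam_len : ∀ j, N ≤ j → lam j = 0)
    (ℓ : ℕ) (hℓ : lam 0 ≤ ℓ) :
    Matrix.det (Matrix.of fun i j : Fin N =>
        (X i : MvPolynomial (Fin N) ℤ) ^ (lam j + (N - 1 - (j : ℕ)))) =
      Matrix.det (Matrix.of fun i j : Fin N =>
        (X i : MvPolynomial (Fin N) ℤ) ^ (N - 1 - (j : ℕ))) *
      Matrix.det (Matrix.of fun i j : Fin ℓ =>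
        eInt N ((conjugatePart lam (i + 1) : ℤ) - (i : ℕ) + (j : ℕ))) := by
  have hlen : lam N = 0 := hlam_len N le_rfl
  obtain ⟨σ, hσl, hσr, hsign⟩ := exists_perm_blockPos hlam_anti hlen hℓ
  set Q := ∏ k : Fin N, (Polynomial.X + Polynomial.C (X k : MvPolynomial (Fin N) ℤ)) with hQ
  have hmonic : Q.Monic := Polynomial.monic_prod_of_monic _ _ fun k _ => Polynomial.monic_X_add_C _
  have hdeg : Q.natDegree = N := natDegree_prod_X_add_C _
  have hroot : ∀ i : Fin N, Q.eval (-X i) = 0 := fun i => by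
    rw [hQ, Polynomial.eval_prod]
    exact Finset.prod_eq_zero (Finset.mem_univ i) (by simp)
  have hcN := conjugatePart_le hlam_anti hlen
  have key := det_pow_blockPos (fun i : Fin N => -(X i : MvPolynomial (Fin N) ℤ))
    Q hmonic hdeg hroot σ
  have hneg : ∀ f : Fin N → ℕ,
      (Matrix.of fun i j : Fin N => (-(X i : MvPolynomial (Fin N) ℤ)) ^ f j).det =
        (∏ j, (-1) ^ f j) * (Matrix.of fun i j : Fin N => (X i : MvPolynomial (Fin N) ℤ) ^ f j).det
      := fun f => by
    rw [← Matrix.det_mul_row]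
    congr 1
    ext1 i j
    exact neg_pow _ _
  have hrev : ∀ f : Fin N → ℕ,
      (Matrix.of fun i j : Fin N => (X i : MvPolynomial (Fin N) ℤ) ^ f j).det =
        (Equiv.Perm.sign (Fin.revPerm : Equiv.Perm (Fin N)) : ℤ) *
          (Matrix.of fun i j : Fin N => (X i : MvPolynomial (Fin N) ℤ) ^ f j.rev).det := fun f => by
    have := Matrix.det_permute' Fin.revPerm
      (Matrix.of fun i j : Fin N => (X i : MvPolynomial (Fin N) ℤ) ^ f j.rev)
    rw [← this]
    congr 1
    ext1 i j
    simp
  have hprod : ∏ j : Fin N, (-1 : MvPolynomial (Fin N) ℤ) ^ lam (j.rev : ℕ) =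
      ∏ j : Fin N, (-1) ^ lam (j : ℕ) :=
    Equiv.prod_comp Fin.revPerm fun j : Fin N => (-1 : MvPolynomial (Fin N) ℤ) ^ lam (j : ℕ)
  have hsq : ∀ f : Fin N → ℕ, (∏ j, (-1 : MvPolynomial (Fin N) ℤ) ^ f j) * ∏ j, (-1) ^ f j = 1 := by
    intro f
    simp [← Finset.prod_mul_distrib, ← mul_pow]
  simp only [hσl, hσr] at key
  rw [hneg (fun j => lam (j.rev : ℕ) + j), hneg (fun j => (j : ℕ)), hsign] at key
  simp only [pow_add, Finset.prod_mul_distrib, hprod] at key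
  simp only [← pow_add] at key
  push_cast at key
  have hbridge : ∀ j : Fin N, N - 1 - (j.rev : ℕ) = j := fun j => by
    simp only [Fin.val_rev]
    omega
  rw [hrev fun j => lam j + (N - 1 - (j : ℕ)), hrev fun j => N - 1 - (j : ℕ)]
  simp only [hbridge, eInt_eq_coeff N _ _ _ (hcN _), ← hQ]
  have h₁ := hsq fun j => lam (j : ℕ)
  have h₂ := hsq fun j => (j : ℕ)
  generalize ∏ j : Fin N, (-1 : MvPolynomial (Fin N) ℤ) ^ lam (j : ℕ) = a at *
  generalize ∏ j : Fin N, (-1 : MvPolynomial (Fin N) ℤ) ^ (j : ℕ) = b at *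
  generalize Matrix.det (Matrix.of fun i j : Fin N =>
    (X i : MvPolynomial (Fin N) ℤ) ^ (lam (j.rev : ℕ) + (j : ℕ))) = A at *
  generalize Matrix.det (Matrix.of fun i j : Fin N =>
    (X i : MvPolynomial (Fin N) ℤ) ^ (j : ℕ)) = V at *
  generalize Matrix.det (Matrix.of fun i j : Fin ℓ =>
    (Q * Polynomial.X ^ (j : ℕ)).coeff (N + (i : ℕ) - conjugatePart lam (i + 1))) = D at *
  have hAV : A = V * D := by
    linear_combination (a * b) * key + (V * D * b * b - A * b * b) * h₁ + (V * D - A) * h₂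
  rw [hAV]
  ring
end

section
/- Let λ and τ be partitions with λ padded to length ℓ ≥ max(ℓ(λ), ℓ(τ)) and λ' , τ' their conjugates padded to length ℓ' ≥ max(λ₁, τ₁). Then in ℤ[x₁,…,x_N] one has the dual skew Jacobi–Trudi identity det( (h_{λ_i − τ_j − i + j}(x))_{1≤i,j≤ℓ} ) = det( (e_{λ'_i − τ'_j − i + j}(x))_{1≤i,j≤ℓ'} ); that is, s_{λ/τ} has equal expressions in complete homogeneous and in elementary symmetric polynomials, and consequently the involution exchanging h_k and e_k sends s_{λ/τ} to s_{λ'/τ'}. -/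
/-- The complete homogeneous symmetric polynomial in `N` variables with an integer index:
`h_k` for `k ≥ 0`, and `0` for `k < 0`. -/
noncomputable def hInt (N : ℕ) (k : ℤ) : MvPolynomial (Fin N) ℤ :=
  if 0 ≤ k then MvPolynomial.hsymm (Fin N) ℤ k.toNat else 0

open Finset PowerSeries

section SymmetricPowerSeries

variable (σ R : Type*) [Fintype σ] [CommRing R]

/-- The generating function of the complete homogeneous symmetric polynomials. -/
theorem mk_hsymm_eq_prod [DecidableEq σ] :
    (PowerSeries.mk fun k => MvPolynomial.hsymm σ R k) =
      ∏ i : σ, PowerSeries.mk fun k => (MvPolynomial.X i : MvPolynomial σ R) ^ k := by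
  ext1 d
  simp only [PowerSeries.coeff_prod, PowerSeries.coeff_mk, MvPolynomial.hsymm]
  refine Finset.sum_bij' (fun s _ => Multiset.toFinsupp (s : Multiset σ))
    (fun l hl => ⟨Finsupp.toMultiset l, ?_⟩) ?_ ?_ ?_ ?_ ?_
  · rw [mem_finsuppAntidiag'] at hl
    rw [Finsupp.card_toMultiset]
    exact hl.1
  · intro s _
    rw [mem_finsuppAntidiag']
    exact ⟨(Finsupp.card_toMultiset _).symm.trans (by simp), Finset.subset_univ _⟩
  · exact fun l hl => Finset.mem_univ _
  · intro s _
    apply Subtype.ext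
    simp
  · intro l hl
    simp
  · intro s _
    rw [Finset.prod_multiset_map_count]
    simp only [Multiset.toFinsupp_apply]
    refine Finset.prod_subset (Finset.subset_univ _) fun x _ hx => ?_
    rw [Multiset.count_eq_zero_of_notMem (by simpa using hx), pow_zero]

/-- The generating function of the signed elementary symmetric polynomials. -/
theorem mk_neg_one_pow_mul_esymm_eq_prod :
    (PowerSeries.mk fun k => (-1) ^ k * MvPolynomial.esymm σ R k) =
      ∏ i : σ, (1 - PowerSeries.C (MvPolynomial.X i : MvPolynomial σ R) * PowerSeries.X) := by
  ext1 d
  simp only [sub_eq_add_neg, Finset.prod_one_add, map_sum, PowerSeries.coeff_mk]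
  have h (t : Finset σ) :
      PowerSeries.coeff d
        (∏ i ∈ t, -(PowerSeries.C (MvPolynomial.X i : MvPolynomial σ R) * PowerSeries.X)) =
      if #t = d then (-1) ^ d * ∏ i ∈ t, MvPolynomial.X i else 0 := by
    rw [Finset.prod_neg, Finset.prod_mul_distrib, Finset.prod_const, ← map_prod]
    have : ((-1) ^ #t : PowerSeries (MvPolynomial σ R)) = PowerSeries.C ((-1) ^ #t) := by simp
    rw [this, ← mul_assoc, ← map_mul, PowerSeries.coeff_C_mul_X_pow]
    by_cases ht : #t = d
    · rw [if_pos ht, if_pos ht.symm, ht]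
    · rw [if_neg ht, if_neg (Ne.symm ht)]
  simp only [h, MvPolynomial.esymm, Finset.mul_sum]
  rw [← Finset.sum_filter]
  refine Finset.sum_congr ?_ fun _ _ => rfl
  ext t
  simp [Finset.mem_powersetCard]

theorem mk_hsymm_mul_mk_esymm [DecidableEq σ] :
    (PowerSeries.mk fun k => MvPolynomial.hsymm σ R k) *
      (PowerSeries.mk fun k => (-1) ^ k * MvPolynomial.esymm σ R k) = 1 := by
  rw [mk_hsymm_eq_prod, mk_neg_one_pow_mul_esymm_eq_prod, ← Finset.prod_mul_distrib]
  refine Finset.prod_eq_one fun i _ => ?_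
  have := congrArg (PowerSeries.rescale (MvPolynomial.X i : MvPolynomial σ R))
    (PowerSeries.mk_one_mul_one_sub_eq_one (MvPolynomial σ R))
  simpa [PowerSeries.rescale_mk, PowerSeries.rescale_X] using this

end SymmetricPowerSeries

section Toeplitz

variable {R : Type*} [CommRing R]

/-- The lower triangular Toeplitz matrix of a power series. -/
noncomputable def lowerToeplitz (n : ℕ) (f : PowerSeries R) : Matrix (Fin n) (Fin n) R :=
  Matrix.of fun a b => if b ≤ a then PowerSeries.coeff ((a : ℕ) - b) f else 0

theorem lowerToeplitz_mul (n : ℕ) (f g : PowerSeries R) :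
    lowerToeplitz n f * lowerToeplitz n g = lowerToeplitz n (f * g) := by
  ext a c
  simp only [lowerToeplitz, Matrix.mul_apply, Matrix.of_apply, Fin.le_def]
  rw [Fin.sum_univ_eq_sum_range (fun b => (if b ≤ (a : ℕ) then PowerSeries.coeff (a - b) f else 0) *
    (if (c : ℕ) ≤ b then PowerSeries.coeff (b - c) g else 0))]
  split_ifs with hca
  · rw [PowerSeries.coeff_mul]
    symm
    refine Finset.sum_of_injOn (fun p => c + p.2) ?_ ?_ ?_ ?_
    · rintro ⟨p, q⟩ hp ⟨p', q'⟩ hp' h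
      simp only [Finset.mem_coe, Finset.HasAntidiagonal.mem_antidiagonal] at hp hp' h
      ext <;> simp only <;> omega
    · rintro ⟨p, q⟩ hp
      simp only [Finset.mem_coe, Finset.HasAntidiagonal.mem_antidiagonal, Finset.mem_range] at hp ⊢
      omega
    · intro b _ hb
      by_cases h : b ≤ (a : ℕ) ∧ (c : ℕ) ≤ b
      · refine absurd ⟨(a - b, b - c), ?_, ?_⟩ hb
        · simp only [Finset.mem_coe, Finset.HasAntidiagonal.mem_antidiagonal]
          omega
        · simp only
          omega
      · rw [not_and_or] at h
        rcases h with h | h <;> simp [h]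
    · rintro ⟨p, q⟩ hp
      simp only [Finset.HasAntidiagonal.mem_antidiagonal] at hp
      rw [if_pos (by omega), if_pos (by simp)]
      congr 3 <;> omega
  · refine Finset.sum_eq_zero fun b _ => ?_
    by_cases h : b ≤ (a : ℕ)
    · rw [if_neg (show ¬ (c : ℕ) ≤ b by omega), mul_zero]
    · rw [if_neg h, zero_mul]

theorem lowerToeplitz_one (n : ℕ) : lowerToeplitz n (1 : PowerSeries R) = 1 := by
  ext a b
  simp only [lowerToeplitz, Matrix.of_apply, Matrix.one_apply, PowerSeries.coeff_one, Fin.ext_iff,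
    Fin.le_def]
  split_ifs <;> first | rfl | omega

theorem det_lowerToeplitz (n : ℕ) (f : PowerSeries R) :
    (lowerToeplitz n f).det = PowerSeries.constantCoeff f ^ n := by
  rw [Matrix.det_of_isLowerTriangular]
  · simp [lowerToeplitz]
  · intro a b hab
    exact if_neg (not_le.mpr hab)

/-- Jacobi's complementary minor formula, for the leading block. -/
theorem det_toBlocks₁₁_of_mul_eq_one {m n : Type*} [Fintype m] [DecidableEq m] [Fintype n]
    [DecidableEq n] {M M' : Matrix (m ⊕ n) (m ⊕ n) R} (h : M * M' = 1) :
    M.toBlocks₁₁.det = M.det * M'.toBlocks₂₂.det := by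
  rw [← Matrix.fromBlocks_toBlocks M, ← Matrix.fromBlocks_toBlocks M',
    Matrix.fromBlocks_multiply, ← Matrix.fromBlocks_one, Matrix.fromBlocks_inj] at h
  have key : M * Matrix.fromBlocks 1 M'.toBlocks₁₂ 0 M'.toBlocks₂₂ =
      Matrix.fromBlocks M.toBlocks₁₁ 0 M.toBlocks₂₁ 1 := by
    conv_lhs => rw [← Matrix.fromBlocks_toBlocks M]
    rw [Matrix.fromBlocks_multiply, h.2.1, h.2.2.2]
    simp
  have := congrArg Matrix.det key
  rw [Matrix.det_mul, Matrix.det_fromBlocks_zero₂₁, Matrix.det_fromBlocks_zero₁₂] at this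
  simpa using this.symm

end Toeplitz

section Conjugate

variable {l : ℕ → ℕ} {ℓ ℓ' : ℕ}

theorem lt_conjugatePart_succ_iff (hl : Antitone l) (hpad : ∀ j, ℓ ≤ j → l j = 0) (i j : ℕ) :
    i < conjugatePart l (j + 1) ↔ j < l i := by
  have hex : ∃ m, l m < j + 1 := ⟨ℓ, by simp [hpad ℓ le_rfl]⟩
  have hset : {k : ℕ | j + 1 ≤ l k} = Set.Iio (Nat.find hex) := by
    ext k
    simp only [Set.mem_ofPred_eq, Set.mem_Iio, Nat.lt_find_iff, not_lt]
    exact ⟨fun h m hm => h.trans (hl hm), fun h => h k le_rfl⟩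
  have hcard : conjugatePart l (j + 1) = Nat.find hex := by
    rw [conjugatePart, hset, ← Finset.coe_Iio, Set.ncard_coe_finset, Nat.card_Iio]
  rw [hcard, ← Set.mem_Iio, ← hset]
  exact Nat.succ_le_iff

theorem conjugatePart_succ_le (hl : Antitone l) (hpad : ∀ j, ℓ ≤ j → l j = 0) (j : ℕ) :
    conjugatePart l (j + 1) ≤ ℓ := by
  by_contra! h
  have := (lt_conjugatePart_succ_iff hl hpad ℓ j).1 h
  simp [hpad ℓ le_rfl] at this

theorem conjugatePart_succ_antitone (hl : Antitone l) (hpad : ∀ j, ℓ ≤ j → l j = 0) :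
    Antitone fun j => conjugatePart l (j + 1) := by
  intro j k hjk
  refine le_of_forall_lt fun i hi => ?_
  rw [lt_conjugatePart_succ_iff hl hpad] at hi ⊢
  omega

/-- The positions of the horizontal and vertical steps along the boundary of a partition inside an
`ℓ × ℓ'` rectangle are complementary. -/
theorem exists_perm_boundary (hl : Antitone l) (hpad : ∀ j, ℓ ≤ j → l j = 0) (hw : l 0 ≤ ℓ') :
    ∃ π : Equiv.Perm (Fin (ℓ + ℓ')),
      (∀ i : Fin ℓ, (π (Fin.castAdd ℓ' i) : ℕ) + i + 1 = l i + ℓ) ∧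
      ∀ j : Fin ℓ', (π (Fin.natAdd ℓ j) : ℕ) + conjugatePart l (j + 1) = ℓ + j := by
  have hle (i : ℕ) : l i ≤ ℓ' := (hl (Nat.zero_le i)).trans hw
  have hconj := conjugatePart_succ_le hl hpad
  have hanti := conjugatePart_succ_antitone hl hpad
  let f : Fin (ℓ + ℓ') → Fin (ℓ + ℓ') := Fin.addCases
    (fun i => ⟨l i + ℓ - 1 - i, by have := hle i; omega⟩)
    (fun j => ⟨ℓ + j - conjugatePart l (j + 1), by omega⟩)
  have hf₁ (i : Fin ℓ) : (f (Fin.castAdd ℓ' i) : ℕ) + i + 1 = l i + ℓ := by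
    simp only [f, Fin.addCases_left]
    omega
  have hf₂ (j : Fin ℓ') : (f (Fin.natAdd ℓ j) : ℕ) + conjugatePart l (j + 1) = ℓ + j := by
    simp only [f, Fin.addCases_right]
    have := hconj j
    omega
  have hcross (i : Fin ℓ) (j : Fin ℓ') : f (Fin.castAdd ℓ' i) ≠ f (Fin.natAdd ℓ j) := by
    intro h
    have h₁ := hf₁ i
    have h₂ := hf₂ j
    have h₃ := lt_conjugatePart_succ_iff hl hpad i j
    rw [h] at h₁
    omega
  have hinj : Function.Injective f := by
    intro a b
    refine Fin.addCases (fun i => ?_) (fun j => ?_) a <;>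
      refine Fin.addCases (fun i' => ?_) (fun j' => ?_) b <;> intro h
    · have h₁ := hf₁ i
      have h₂ := hf₁ i'
      rw [h] at h₁
      congr 1
      ext
      rcases le_total (i : ℕ) i' with hi | hi <;> have := hl hi <;> omega
    · exact absurd h (hcross i j')
    · exact absurd h.symm (hcross i' j)
    · have h₁ := hf₂ j
      have h₂ := hf₂ j'
      rw [h] at h₁
      congr 1
      ext
      rcases le_total (j : ℕ) j' with hi | hi <;> have := hanti hi <;> simp only at this <;> omega
  exact ⟨Equiv.ofBijective f (Finite.injective_iff_bijective.1 hinj), hf₁, hf₂⟩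

theorem sign_perm_boundary (hl : Antitone l) (hpad : ∀ j, ℓ ≤ j → l j = 0)
    {π : Equiv.Perm (Fin (ℓ + ℓ'))}
    (hπ₁ : ∀ i : Fin ℓ, (π (Fin.castAdd ℓ' i) : ℕ) + i + 1 = l i + ℓ)
    (hπ₂ : ∀ j : Fin ℓ', (π (Fin.natAdd ℓ j) : ℕ) + conjugatePart l (j + 1) = ℓ + j) :
    Equiv.Perm.sign π =
      (-1) ^ (∑ i : Fin ℓ, (i : ℕ)) * (-1) ^ (∑ j : Fin ℓ', conjugatePart l (j + 1)) := by
  have hconj := conjugatePart_succ_le hl hpad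
  have hanti := conjugatePart_succ_antitone hl hpad
  rw [Equiv.Perm.sign_eq_prod_prod_Iio, Fin.prod_univ_add, ← Finset.prod_pow_eq_pow_sum,
    ← Finset.prod_pow_eq_pow_sum]
  congr 1
  · refine Finset.prod_congr rfl fun j _ => ?_
    have hcard : (j : ℕ) = #(Finset.Iio (Fin.castAdd ℓ' j)) := by simp
    rw [hcard, ← Finset.prod_const]
    refine Finset.prod_congr rfl fun a ha => ?_
    rw [Finset.mem_Iio] at ha
    obtain ⟨i, rfl⟩ : ∃ i : Fin ℓ, a = Fin.castAdd ℓ' i :=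
      ⟨⟨a, lt_trans ha j.2⟩, rfl⟩
    have hij : (i : ℕ) < j := ha
    have h₁ := hπ₁ i
    have h₂ := hπ₁ j
    have h₃ := hl hij.le
    rw [if_neg (by rw [Fin.lt_def]; omega)]
  · refine Finset.prod_congr rfl fun j _ => ?_
    have hiff (a : Fin (ℓ + ℓ')) (ha : a < Fin.natAdd ℓ j) :
        π a < π (Fin.natAdd ℓ j) ↔ ¬ (a : ℕ) < conjugatePart l (j + 1) := by
      have h₂ := hπ₂ j
      rw [Fin.lt_def] at ha ⊢
      have h₄ := hconj j
      induction a using Fin.addCases with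
      | left i =>
        have h₁ := hπ₁ i
        have h₃ := lt_conjugatePart_succ_iff hl hpad i j
        simp only [Fin.val_castAdd]
        omega
      | right k =>
        have h₁ := hπ₂ k
        simp only [Fin.val_natAdd] at ha ⊢
        have h₃ := hanti (show (k : ℕ) ≤ j by omega)
        simp only at h₃
        omega
    have hprod : ∏ a ∈ Finset.Iio (Fin.natAdd ℓ j),
        (if π a < π (Fin.natAdd ℓ j) then (1 : ℤˣ) else -1) =
        ∏ a ∈ (Finset.Iio (Fin.natAdd ℓ j)).map Fin.valEmbedding,
          if a < conjugatePart l (j + 1) then (-1 : ℤˣ) else 1 := by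
      rw [Finset.prod_map]
      refine Finset.prod_congr rfl fun a ha => ?_
      rw [Finset.mem_Iio] at ha
      simp only [hiff a ha, ite_not, Fin.valEmbedding_apply]
    rw [hprod, Fin.map_valEmbedding_Iio, ← Finset.prod_filter, Finset.prod_const]
    congr 1
    have : (Finset.Iio ((Fin.natAdd ℓ j : Fin (ℓ + ℓ')) : ℕ)).filter
        (· < conjugatePart l (j + 1)) = Finset.range (conjugatePart l (j + 1)) := by
      ext a
      have := hconj j
      simp only [Fin.val_natAdd, Finset.mem_filter, Finset.mem_Iio, Finset.mem_range]
      omega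
    rw [this, Finset.card_range]

end Conjugate

/-- Let `λ`, `τ` be partitions padded with zeros to a common length
`ℓ ≥ max(ℓ(λ), ℓ(τ))`, and let their conjugates `λ'`, `τ'` be padded to a common length
`ℓ' ≥ max(λ₁, τ₁)`.  Then in `ℤ[x₁,…,x_N]` the dual skew Jacobi–Trudi identity holds:
`det((h_{λ_i - τ_j - i + j})_{1≤i,j≤ℓ}) = det((e_{λ'_i - τ'_j - i + j})_{1≤i,j≤ℓ'})`;
i.e. the skew Schur polynomial `s_{λ/τ}` has equal expressions in complete homogeneous
and in elementary symmetric polynomials (so the involution exchanging `h_k` and `e_k`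
sends `s_{λ/τ}` to `s_{λ'/τ'}`). -/
theorem statement7 (N ℓ ℓ' : ℕ) (lam tau : ℕ → ℕ)
    (hlam : Antitone lam) (htau : Antitone tau)
    (hlam_pad : ∀ j, ℓ ≤ j → lam j = 0) (htau_pad : ∀ j, ℓ ≤ j → tau j = 0)
    (hlam_width : lam 0 ≤ ℓ') (htau_width : tau 0 ≤ ℓ') :
    Matrix.det (Matrix.of fun i j : Fin ℓ =>
        hInt N ((lam i : ℤ) - tau j - (i : ℕ) + (j : ℕ))) =
      Matrix.det (Matrix.of fun i j : Fin ℓ' =>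
        eInt N ((conjugatePart lam (i + 1) : ℤ) - conjugatePart tau (j + 1)
          - (i : ℕ) + (j : ℕ))) := by
  obtain ⟨π, hπ₁, hπ₂⟩ := exists_perm_boundary hlam hlam_pad hlam_width
  obtain ⟨ρ, hρ₁, hρ₂⟩ := exists_perm_boundary htau htau_pad htau_width
  have hsπ := sign_perm_boundary hlam hlam_pad hπ₁ hπ₂
  have hsρ := sign_perm_boundary htau htau_pad hρ₁ hρ₂
  set H : PowerSeries (MvPolynomial (Fin N) ℤ) :=
    PowerSeries.mk fun k => MvPolynomial.hsymm (Fin N) ℤ k with hH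
  set E : PowerSeries (MvPolynomial (Fin N) ℤ) :=
    PowerSeries.mk fun k => (-1) ^ k * MvPolynomial.esymm (Fin N) ℤ k with hE
  let e : Fin ℓ ⊕ Fin ℓ' ≃ Fin (ℓ + ℓ') := finSumFinEquiv
  let M := ((lowerToeplitz (ℓ + ℓ') H).submatrix π ρ).submatrix e e
  let M' := ((lowerToeplitz (ℓ + ℓ') E).submatrix ρ π).submatrix e e
  have hMM' : M * M' = 1 := by
    simp only [M, M']
    rw [Matrix.submatrix_mul_equiv, Matrix.submatrix_mul_equiv, lowerToeplitz_mul,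
      mk_hsymm_mul_mk_esymm, lowerToeplitz_one, Matrix.submatrix_one_equiv,
      Matrix.submatrix_one_equiv]
  have hdetM : M.det = ((Equiv.Perm.sign π : ℤ) : MvPolynomial (Fin N) ℤ) *
      ((Equiv.Perm.sign ρ : ℤ) : MvPolynomial (Fin N) ℤ) := by
    have hsub : (lowerToeplitz (ℓ + ℓ') H).submatrix π ρ =
        ((lowerToeplitz (ℓ + ℓ') H).submatrix id ρ).submatrix π id := rfl
    simp only [M]
    rw [Matrix.det_submatrix_equiv_self, hsub, Matrix.det_permute, Matrix.det_permute',
      det_lowerToeplitz]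
    simp [hH, ← PowerSeries.coeff_zero_eq_constantCoeff_apply]
  have h₁₁ : M.toBlocks₁₁ = Matrix.of fun i j : Fin ℓ =>
      hInt N ((lam i : ℤ) - tau j - (i : ℕ) + (j : ℕ)) := by
    ext1 i j
    have hi := hπ₁ i
    have hj := hρ₁ j
    simp only [Matrix.toBlocks₁₁, Matrix.of_apply, M, Matrix.submatrix_apply, e,
      finSumFinEquiv_apply_left, lowerToeplitz, hInt, Fin.le_def, hH, PowerSeries.coeff_mk]
    split_ifs
    · congr 1
      omega
    · omega
    · omega
    · rfl
  have h₂₂ : M'.toBlocks₂₂ = Matrix.of fun j k : Fin ℓ' =>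
      (-1) ^ (conjugatePart tau (j + 1) + (j : ℕ)) *
        (Matrix.of fun j k : Fin ℓ' => (-1) ^ (conjugatePart lam (k + 1) + (k : ℕ)) *
          (Matrix.of fun i j : Fin ℓ' => eInt N ((conjugatePart lam (i + 1) : ℤ) -
            conjugatePart tau (j + 1) - (i : ℕ) + (j : ℕ))).transpose j k) j k := by
    ext1 j k
    have hk := hπ₂ k
    have hj := hρ₂ j
    simp only [Matrix.toBlocks₂₂, Matrix.of_apply, M', Matrix.submatrix_apply, e,
      finSumFinEquiv_apply_right, lowerToeplitz, eInt, Fin.le_def, hE, PowerSeries.coeff_mk,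
      Matrix.transpose_apply]
    split_ifs with h h'
    · rw [← mul_assoc, ← pow_add]
      congr 1
      · rw [neg_one_pow_eq_pow_mod_two, neg_one_pow_eq_pow_mod_two (n := _ + _)]
        congr 1
        omega
      · congr 1
        omega
    · omega
    · omega
    · simp
  have hmain := det_toBlocks₁₁_of_mul_eq_one hMM'
  rw [h₁₁, h₂₂, hdetM, Matrix.det_mul_column, Matrix.det_mul_row, Matrix.det_transpose, hsπ, hsρ]
    at hmain
  rw [hmain, ← mul_assoc, ← mul_assoc]
  convert one_mul _
  rw [Finset.prod_pow_eq_pow_sum, Finset.prod_pow_eq_pow_sum, Finset.sum_add_distrib,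
    Finset.sum_add_distrib]
  push_cast
  simp only [← pow_add]
  refine Even.neg_one_pow ?_
  simp only [Nat.even_iff]
  omega
end

section
/- Let λ = (λ₁ ≥ … ≥ λ_n ≥ 0) and μ = (μ₁ ≥ … ≥ μ_m ≥ 0) be partitions, and let x = (x₁,…,x_N) and y = (y₁,…,y_M) be two disjoint sets of variables. Define the (m+n) × (m+n) matrix M with entries M_{ij} = h_{μ_{m+1−i} + i − j}(y) for 1 ≤ i ≤ m and M_{ij} = h_{λ_{i−m} − (i−m) + (j−m)}(x) for m < i ≤ m+n (1 ≤ j ≤ m+n). Let g ∈ S_{m+n} be a minimal-length representative of a left coset of S_m × S_n, let C = {g(1),…,g(m)}, and let τ = τ(g). Then sgn(g) · det(M[{1,…,m}, C]) · det(M[{m+1,…,m+n}, C^c]) = (−1)^{|τ|} s_{μ/τ'}(y) · s_{λ/τ}(x), where M[R, C] denotes the submatrix with rows R and columns C taken in increasing order. -/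
open MvPolynomial

/-- `g ∈ S_{m+n}` (acting on `Fin (m+n)`, 0-based) is the minimal-length representative of
its left coset of `S_m × S_n` exactly when it is increasing on the first `m` points and
increasing on the last `n` points. -/
def IsMinRep (m n : ℕ) (g : Equiv.Perm (Fin (m + n))) : Prop :=
  (∀ i j : Fin (m + n), i < j → (j : ℕ) < m → g i < g j) ∧
  (∀ i j : Fin (m + n), i < j → m ≤ (i : ℕ) → g i < g j)

/-- Position `p` of the word `w(g)` carries the symbol `×` iff `p` is the image under `g`
of one of the first `m` points; otherwise it carries `○`. -/
def IsCross (m n : ℕ) (g : Equiv.Perm (Fin (m + n))) (p : Fin (m + n)) : Prop :=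
  ∃ i : Fin (m + n), (i : ℕ) < m ∧ g i = p

open scoped Classical in
/-- The partition `τ(g)`, presented as the multiset of its (positive) parts: each `○`
symbol of the word `w(g)` contributes a part equal to the number of `×` symbols strictly
to its right; zero contributions are not parts. -/
noncomputable def tauOf (m n : ℕ) (g : Equiv.Perm (Fin (m + n))) : Multiset ℕ :=
  (((Finset.univ.filter fun p : Fin (m + n) => ¬ IsCross m n g p).val).map fun p =>
      (Finset.univ.filter fun q : Fin (m + n) => p < q ∧ IsCross m n g q).card).filter
    (· ≠ 0)

/-- The parts of `τ(g)` listed in weakly decreasing order, as a function `ℕ → ℕ`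
(0-based and padded with zeros): `tauParts m n g k` is `τ(g)_{k+1}`. -/
noncomputable def tauParts (m n : ℕ) (g : Equiv.Perm (Fin (m + n))) : ℕ → ℕ :=
  fun k => (((tauOf m n g).sort (· ≤ ·)).reverse).getD k 0

namespace IsMinRep

variable {m n : ℕ} {g : Equiv.Perm (Fin (m + n))}

theorem strictMono_castAdd (hg : IsMinRep m n g) :
    StrictMono fun i : Fin m => g (Fin.castAdd n i) :=
  fun _ _ h => hg.1 _ _ h (by simp)

theorem strictMono_natAdd (hg : IsMinRep m n g) :
    StrictMono fun j : Fin n => g (Fin.natAdd m j) :=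
  fun _ _ h => hg.2 _ _ (by simpa using h) (by simp)

end IsMinRep

section Counting

open Finset

variable {m n : ℕ} (g : Equiv.Perm (Fin (m + n)))

/-- The number of `×` symbols to the right of the `j`-th `○` symbol. -/
def crossesAbove (j : Fin n) : ℕ :=
  #{i : Fin m | g (Fin.natAdd m j) < g (Fin.castAdd n i)}

/-- The number of `○` symbols to the left of the `i`-th `×` symbol. -/
def circlesBelow (i : Fin m) : ℕ :=
  #{j : Fin n | g (Fin.natAdd m j) < g (Fin.castAdd n i)}

theorem castAdd_ne_natAdd (i : Fin m) (j : Fin n) : Fin.castAdd n i ≠ Fin.natAdd m j := by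
  intro h
  have := congrArg Fin.val h
  simp only [Fin.val_castAdd, Fin.val_natAdd] at this
  omega

theorem val_eq_card_add_card (p : Fin (m + n)) :
    (p : ℕ) = #{i : Fin m | g (Fin.castAdd n i) < p} + #{j : Fin n | g (Fin.natAdd m j) < p} := by
  have h : #{q : Fin (m + n) | g q < p} = p := by
    rw [← Fin.card_Iio p]
    exact card_bij (fun q _ => g q) (by simp) (by simp) fun q hq =>
      ⟨g.symm q, by simpa using hq, by simp⟩
  rw [← h]
  simp only [card_filter, Fin.sum_univ_add]

variable {g}

theorem val_castAdd_eq (hg : IsMinRep m n g) (i : Fin m) :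
    (g (Fin.castAdd n i) : ℕ) = i + circlesBelow g i := by
  rw [val_eq_card_add_card g, circlesBelow]
  simp only [hg.strictMono_castAdd.lt_iff_lt]
  congr 1
  rw [← Fin.card_Iio i]
  congr 1
  ext
  simp

theorem val_natAdd_add_crossesAbove (hg : IsMinRep m n g) (j : Fin n) :
    (g (Fin.natAdd m j) : ℕ) + crossesAbove g j = m + j := by
  have hd : #{k : Fin n | g (Fin.natAdd m k) < g (Fin.natAdd m j)} = j := by
    simp only [hg.strictMono_natAdd.lt_iff_lt]
    rw [← Fin.card_Iio j]
    congr 1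
    ext
    simp
  have hc : #{i : Fin m | g (Fin.castAdd n i) < g (Fin.natAdd m j)} + crossesAbove g j = m := by
    have := card_filter_add_card_filter_not (s := (univ : Finset (Fin m)))
      fun i => g (Fin.castAdd n i) < g (Fin.natAdd m j)
    rw [card_univ, Fintype.card_fin] at this
    refine Eq.trans ?_ this
    rw [crossesAbove]
    congr 2
    ext i
    have := g.injective.ne (castAdd_ne_natAdd i j)
    simp only [mem_filter, mem_univ, true_and, not_lt]
    exact ⟨le_of_lt, fun h => lt_of_le_of_ne h this.symm⟩
  have := val_eq_card_add_card g (g (Fin.natAdd m j))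
  omega

theorem antitone_crossesAbove (hg : IsMinRep m n g) : Antitone (crossesAbove g) := by
  intro j k hjk
  refine card_le_card fun i => ?_
  simp only [mem_filter, mem_univ, true_and]
  exact lt_of_le_of_lt (hg.strictMono_natAdd.monotone hjk)

theorem le_crossesAbove_iff (hg : IsMinRep m n g) (i : Fin m) (j : Fin n) :
    m - i ≤ crossesAbove g j ↔ g (Fin.natAdd m j) < g (Fin.castAdd n i) := by
  constructor
  · intro h
    by_contra hlt
    have hsub : crossesAbove g j ≤ #(Ioi i) := by
      refine card_le_card fun k => ?_
      simp only [mem_filter, mem_univ, true_and, mem_Ioi]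
      exact fun hk => hg.strictMono_castAdd.lt_iff_lt.1 (lt_of_le_of_lt (not_lt.1 hlt) hk)
    rw [Fin.card_Ioi] at hsub
    omega
  · intro h
    rw [← Fin.card_Ici]
    refine card_le_card fun k => ?_
    simp only [mem_filter, mem_univ, true_and, mem_Ici]
    exact fun hk => lt_of_lt_of_le h (hg.strictMono_castAdd.monotone hk)

theorem sign_eq_neg_one_pow_sum (hg : IsMinRep m n g) :
    Equiv.Perm.sign g = (-1) ^ ∑ j, crossesAbove g j := by
  have hIio (k : Fin (m + n)) (f : Fin (m + n) → ℤˣ) :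
      ∏ i ∈ Iio k, f i = ∏ i, if i < k then f i else 1 := by
    rw [← prod_filter]
    congr 1
    ext
    simp
  rw [Equiv.Perm.sign_eq_prod_prod_Iio, Fin.prod_univ_add, ← prod_pow_eq_pow_sum]
  rw [prod_eq_one, one_mul]
  · refine prod_congr rfl fun j _ => ?_
    rw [hIio, Fin.prod_univ_add, mul_comm, prod_eq_one, one_mul, crossesAbove, ← prod_const,
      prod_filter]
    · refine prod_congr rfl fun i _ => ?_
      have hlt : Fin.castAdd n i < Fin.natAdd m j := by
        rw [Fin.lt_def, Fin.val_castAdd, Fin.val_natAdd]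
        omega
      have := g.injective.ne (castAdd_ne_natAdd i j)
      rw [if_pos hlt]
      split_ifs with h₁ h₂ h₂
      · exact absurd h₁ h₂.asymm
      · rfl
      · rfl
      · exact absurd (lt_of_le_of_ne (not_lt.1 h₁) this.symm) h₂
    · intro k _
      split_ifs with h₁ h₂
      · rfl
      · exact absurd (hg.2 _ _ h₁ (by simp)) h₂
      · rfl
  · intro j _
    refine prod_eq_one fun i hi => ?_
    rw [if_pos (hg.1 _ _ (mem_Iio.1 hi) (by simp))]

end Counting

section Tau

open Finset

variable {m n : ℕ} {g : Equiv.Perm (Fin (m + n))}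

theorem isCross_castAdd (i : Fin m) : IsCross m n g (g (Fin.castAdd n i)) :=
  ⟨Fin.castAdd n i, by simp, rfl⟩

theorem not_isCross_natAdd (j : Fin n) : ¬ IsCross m n g (g (Fin.natAdd m j)) := by
  rintro ⟨i, hi, h⟩
  rw [g.injective h, Fin.val_natAdd] at hi
  omega

theorem tauOf_eq_filter_ofFn :
    tauOf m n g = ((List.ofFn (crossesAbove g)).filter (· ≠ 0) : List ℕ) := by
  classical
  have hcircle : (univ.filter fun p : Fin (m + n) => ¬ IsCross m n g p) =
      univ.map ((Fin.natAddEmb m).trans g.toEmbedding) := by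
    ext p
    obtain ⟨q, rfl⟩ := g.surjective p
    simp only [mem_filter, mem_univ, true_and, mem_map, Function.Embedding.trans_apply,
      Equiv.coe_toEmbedding, Fin.natAddEmb_apply, g.injective.eq_iff]
    induction q using Fin.addCases with
    | left i => simpa [isCross_castAdd] using fun j => (castAdd_ne_natAdd i j).symm
    | right j => simpa using not_isCross_natAdd j
  have hcross (j : Fin n) : (univ.filter fun q : Fin (m + n) =>
      g (Fin.natAdd m j) < q ∧ IsCross m n g q).card = crossesAbove g j := by
    symm
    refine card_bij (fun i _ => g (Fin.castAdd n i)) ?_ ?_ ?_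
    · intro i hi
      simpa [isCross_castAdd] using hi
    · intro i _ k _ h
      exact Fin.castAdd_injective _ _ (g.injective h)
    · rintro q hq
      simp only [mem_filter, mem_univ, true_and] at hq
      obtain ⟨hlt, i, hi, rfl⟩ := hq
      exact ⟨⟨i, hi⟩, by simpa using hlt, rfl⟩
  have hfn : ((List.ofFn (crossesAbove g) : List ℕ) : Multiset ℕ) =
      (univ : Finset (Fin n)).val.map (crossesAbove g) := by
    rw [List.ofFn_eq_map]
    rfl
  rw [tauOf, ← Multiset.filter_coe, hfn]
  congr 1
  · convert congrArg (fun s : Finset (Fin (m + n)) => s.val.map fun p =>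
      (univ.filter fun q : Fin (m + n) => p < q ∧ IsCross m n g q).card) hcircle using 1
    rw [map_val, Multiset.map_map]
    exact Multiset.map_congr rfl fun j _ => (hcross j).symm

theorem sum_filter_ne_zero (l : List ℕ) : (l.filter (· ≠ 0)).sum = l.sum := by
  induction l with
  | nil => rfl
  | cons a l ih => by_cases h : a = 0 <;> simp_all

theorem sum_tauOf : (tauOf m n g).sum = ∑ j, crossesAbove g j := by
  rw [tauOf_eq_filter_ofFn, Multiset.sum_coe, sum_filter_ne_zero, List.sum_ofFn]

theorem getD_filter_ne_zero {l : List ℕ} (hl : l.Pairwise (· ≥ ·)) (k : ℕ) :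
    (l.filter (· ≠ 0)).getD k 0 = l.getD k 0 := by
  induction l generalizing k with
  | nil => rfl
  | cons a l ih =>
    rw [List.pairwise_cons] at hl
    by_cases h : a = 0
    · have hzero : ∀ b ∈ a :: l, b = 0 := by
        intro b hb
        rcases List.mem_cons.1 hb with rfl | hb
        · exact h
        · have := hl.1 b hb
          omega
      rw [List.filter_eq_nil_iff.2 (by simpa using hzero), List.getD_nil,
        List.getD_eq_getElem?_getD]
      rcases hk : (a :: l)[k]? with _ | b
      · rfl
      · exact (hzero b (List.mem_of_getElem? hk)).symm
    · rw [List.filter_cons_of_pos (by simpa using h)]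
      cases k with
      | zero => rfl
      | succ k => simpa using ih hl.2 k

theorem tauParts_eq (hg : IsMinRep m n g) (k : ℕ) :
    tauParts m n g k = (List.ofFn (crossesAbove g)).getD k 0 := by
  have hsorted : (List.ofFn (crossesAbove g)).Pairwise (· ≥ ·) :=
    List.pairwise_ofFn.2 fun _ _ h => antitone_crossesAbove hg h.le
  have hsort : ((tauOf m n g).sort (· ≤ ·)).reverse =
      (List.ofFn (crossesAbove g)).filter (· ≠ 0) := by
    refine List.Perm.eq_of_pairwise' (r := (· ≥ ·)) ?_ (hsorted.filter _) ?_
    · exact List.pairwise_reverse.2 (Multiset.pairwise_sort _ _)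
    · refine (List.reverse_perm _).trans (Multiset.coe_eq_coe.1 ?_)
      rw [Multiset.sort_eq, tauOf_eq_filter_ofFn]
  rw [tauParts, hsort, getD_filter_ne_zero hsorted]

theorem tauParts_val (hg : IsMinRep m n g) (j : Fin n) :
    tauParts m n g j = crossesAbove g j := by
  rw [tauParts_eq hg, List.getD_eq_getElem _ _ (by simp)]
  simp

theorem tauParts_of_le (hg : IsMinRep m n g) {k : ℕ} (hk : n ≤ k) : tauParts m n g k = 0 := by
  rw [tauParts_eq hg, List.getD_eq_default _ _ (by simpa using hk)]

theorem conjugatePart_tauParts (hg : IsMinRep m n g) (i : Fin m) :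
    conjugatePart (tauParts m n g) ((i.rev : ℕ) + 1) = circlesBelow g i := by
  have hset : {k : ℕ | (i.rev : ℕ) + 1 ≤ tauParts m n g k} =
      ((univ.filter fun j : Fin n => g (Fin.natAdd m j) < g (Fin.castAdd n i)).map
        Fin.valEmbedding : Finset ℕ) := by
    have hi : (i.rev : ℕ) + 1 = m - i := by
      rw [Fin.val_rev]
      omega
    ext k
    simp only [Set.mem_ofPred_eq, coe_map, Set.mem_image, mem_coe, mem_filter, mem_univ, true_and,
      Fin.valEmbedding_apply, hi, ← le_crossesAbove_iff hg]
    constructor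
    · intro h
      have hk : k < n := by
        by_contra hk
        rw [tauParts_of_le hg (not_lt.1 hk)] at h
        omega
      exact ⟨⟨k, hk⟩, by rwa [← tauParts_val hg], rfl⟩
    · rintro ⟨j, hj, rfl⟩
      rwa [tauParts_val hg]
  rw [conjugatePart, hset, Set.ncard_coe_finset, card_map, circlesBelow]

end Tau

/-- Let `λ = (λ₁ ≥ … ≥ λ_n ≥ 0)`, `μ = (μ₁ ≥ … ≥ μ_m ≥ 0)` be partitions
and `x = (x₁,…,x_N)`, `y = (y₁,…,y_M)` disjoint variable sets.  Let `Mmat` be the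
`(m+n) × (m+n)` matrix with entries `h_{μ_{m+1-i} + i - j}(y)` in rows `1 ≤ i ≤ m` and
`h_{λ_{i-m} - (i-m) + (j-m)}(x)` in rows `m < i ≤ m+n`.  For a minimal-length coset
representative `g` with column set `C = {g(1),…,g(m)}` (already increasing) and
`τ = τ(g)`, we have
`sgn(g) · det(Mmat[{1..m}, C]) · det(Mmat[{m+1..m+n}, Cᶜ]) = (-1)^{|τ|} s_{μ/τ'}(y) · s_{λ/τ}(x)`,
the skew Schur polynomials being given by Jacobi–Trudi determinants (of sizes `m` and `n`). -/
theorem statement8 (m n N M : ℕ) (lam mu : ℕ → ℕ)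
    (hlam_anti : Antitone lam) (hlam_len : ∀ j, n ≤ j → lam j = 0)
    (hmu_anti : Antitone mu) (hmu_len : ∀ j, m ≤ j → mu j = 0)
    (Mmat : Matrix (Fin (m + n)) (Fin (m + n)) (MvPolynomial (Fin N ⊕ Fin M) ℤ))
    (hMtop : ∀ (i j : Fin (m + n)), (i : ℕ) < m → Mmat i j =
      rename Sum.inr (hInt M ((mu (m - 1 - (i : ℕ)) : ℤ) + (i : ℕ) - (j : ℕ))))
    (hMbot : ∀ (i j : Fin (m + n)), m ≤ (i : ℕ) → Mmat i j =
      rename Sum.inl (hInt N ((lam ((i : ℕ) - m) : ℤ) - (i : ℕ) + (j : ℕ))))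
    (g : Equiv.Perm (Fin (m + n))) (hg : IsMinRep m n g) :
    ((Equiv.Perm.sign g : ℤ) : MvPolynomial (Fin N ⊕ Fin M) ℤ) *
        Matrix.det (Matrix.of fun i j : Fin m =>
          Mmat ⟨i, by omega⟩ (g ⟨j, by omega⟩)) *
        Matrix.det (Matrix.of fun i j : Fin n =>
          Mmat ⟨m + i, by omega⟩ (g ⟨m + j, by omega⟩)) =
      (-1 : MvPolynomial (Fin N ⊕ Fin M) ℤ) ^ (tauOf m n g).sum *
        rename Sum.inr (Matrix.det (Matrix.of fun i j : Fin m =>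
          hInt M ((mu i : ℤ) - conjugatePart (tauParts m n g) ((j : ℕ) + 1)
            - (i : ℕ) + (j : ℕ)))) *
        rename Sum.inl (Matrix.det (Matrix.of fun i j : Fin n =>
          hInt N ((lam i : ℤ) - tauParts m n g j - (i : ℕ) + (j : ℕ)))) := by
  have hsign : ((Equiv.Perm.sign g : ℤ) : MvPolynomial (Fin N ⊕ Fin M) ℤ) =
      (-1) ^ (tauOf m n g).sum := by
    rw [sign_eq_neg_one_pow_sum hg, sum_tauOf]
    simp
  rw [hsign, AlgHom.map_det, AlgHom.map_det]
  refine congrArg₂ (· * ·) (congrArg₂ (· * ·) rfl ?_) ?_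
  · rw [← Matrix.det_submatrix_equiv_self Fin.revPerm]
    congr 1
    ext1 i j
    simp only [Matrix.submatrix_apply, Matrix.of_apply, Fin.revPerm_apply,
      AlgHom.mapMatrix_apply, Matrix.map_apply]
    rw [hMtop _ _ i.rev.isLt]
    have hc := val_castAdd_eq hg j.rev
    have ht := conjugatePart_tauParts hg j.rev
    rw [Fin.rev_rev] at ht
    have hi : m - 1 - (i.rev : ℕ) = i := by
      rw [Fin.val_rev]
      omega
    have hri : (i.rev : ℕ) + i + 1 = m := by
      rw [Fin.val_rev]
      omega
    have hrj : (j.rev : ℕ) + j + 1 = m := by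
      rw [Fin.val_rev]
      omega
    have hc' : (g ⟨j.rev, by omega⟩ : ℕ) = j.rev + circlesBelow g j.rev := hc
    simp only [hi, ht, hc']
    congr 2
    push_cast
    omega
  · congr 1
    ext1 i j
    simp only [Matrix.of_apply, AlgHom.mapMatrix_apply, Matrix.map_apply]
    rw [hMbot _ _ (by simp), tauParts_val hg]
    have hd : (g ⟨m + j, by omega⟩ : ℕ) + crossesAbove g j = m + j :=
      val_natAdd_add_crossesAbove hg j
    simp only [Nat.add_sub_cancel_left]
    congr 2
    push_cast
    omega
end

section
/- Let λ = (λ₁ ≥ … ≥ λ_n ≥ 0) and μ = (μ₁ ≥ … ≥ μ_m ≥ 0) be partitions, and let x = (x₁,…,x_N), y = (y₁,…,y_M) be two disjoint sets of variables. Let M be the (m+n) × (m+n) matrix with M_{ij} = h_{μ_{m+1−i} + i − j}(y) for 1 ≤ i ≤ m and M_{ij} = h_{λ_{i−m} − (i−m) + (j−m)}(x) for m < i ≤ m+n. Then det(M) = Σ_τ (−1)^{|τ|} s_{λ/τ}(x) · s_{μ/τ'}(y), where the sum ranges over all partitions τ with at most n parts each of size at most m; moreover the same identity holds with the sum ranging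 over all partitions τ, since all additional terms vanish. -/
open MvPolynomial

/-- A partition: a weakly decreasing sequence of naturals, eventually zero
(`parts 0 = τ₁`, `parts 1 = τ₂`, …). -/
structure NatPartition where
  parts : ℕ → ℕ
  antitone : Antitone parts
  eventually_zero : ∃ K, ∀ j, K ≤ j → parts j = 0

/-- The size `|τ|`, the sum of the parts. -/
noncomputable def NatPartition.size (τ : NatPartition) : ℕ := ∑ᶠ j, τ.parts j

/-- The number of (nonzero) parts of `τ`. -/
noncomputable def NatPartition.length (τ : NatPartition) : ℕ :=
  Set.ncard {j : ℕ | τ.parts j ≠ 0}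

/-- The summand `(-1)^{|τ|} s_{λ/τ}(x) · s_{μ/τ'}(y)`, the skew Schur polynomials being
given by Jacobi–Trudi determinants padded to lengths `n + ℓ(τ)` resp. `m + τ₁`. -/
noncomputable def skewTerm (m n N M : ℕ) (lam mu : ℕ → ℕ) (τ : NatPartition) :
    MvPolynomial (Fin N ⊕ Fin M) ℤ :=
  (-1 : MvPolynomial (Fin N ⊕ Fin M) ℤ) ^ τ.size *
    rename Sum.inl (Matrix.det (Matrix.of fun i j : Fin (n + τ.length) =>
      hInt N ((lam i : ℤ) - τ.parts j - (i : ℕ) + (j : ℕ)))) *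
    rename Sum.inr (Matrix.det (Matrix.of fun i j : Fin (m + τ.parts 0) =>
      hInt M ((mu i : ℤ) - conjugatePart τ.parts ((j : ℕ) + 1) - (i : ℕ) + (j : ℕ))))

namespace NatPartition

theorem ext_parts {σ τ : NatPartition} (h : σ.parts = τ.parts) : σ = τ := by
  cases σ; cases τ; cases h; rfl

/-- The cell `(k, b)` lies in the diagram of `τ` iff `(b, k)` lies in the conjugate diagram. -/
theorem lt_conjugatePart_iff (τ : NatPartition) (b k : ℕ) :
    k < conjugatePart τ.parts (b + 1) ↔ b < τ.parts k := by
  classical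
  have hex : ∃ j, τ.parts j ≤ b := by
    obtain ⟨K, hK⟩ := τ.eventually_zero
    exact ⟨K, by simp [hK K le_rfl]⟩
  have hlt (j : ℕ) : b < τ.parts j ↔ j < Nat.find hex := by
    rw [Nat.lt_find_iff]
    exact ⟨fun h i hi => not_le.2 (h.trans_le (τ.antitone hi)), fun h => not_le.1 (h j le_rfl)⟩
  have hset : {j : ℕ | b + 1 ≤ τ.parts j} = (Finset.range (Nat.find hex) : Set ℕ) := by
    ext j
    simp [← hlt]
  rw [conjugatePart, hset, Set.ncard_coe_finset, Finset.card_range, hlt]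

theorem length_eq_conjugatePart (τ : NatPartition) : τ.length = conjugatePart τ.parts (0 + 1) := by
  simp [length, conjugatePart, Nat.one_le_iff_ne_zero]

theorem length_le_iff (τ : NatPartition) (n : ℕ) : τ.length ≤ n ↔ τ.parts n = 0 := by
  rw [← not_lt, length_eq_conjugatePart, lt_conjugatePart_iff]
  omega

theorem conjugatePart_eq_zero_of_le (τ : NatPartition) {b : ℕ} (h : τ.parts 0 ≤ b) :
    conjugatePart τ.parts (b + 1) = 0 := by
  have := τ.lt_conjugatePart_iff b 0
  omega

theorem conjugatePart_antitone (τ : NatPartition) {b c : ℕ} (h : b ≤ c) :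
    conjugatePart τ.parts (c + 1) ≤ conjugatePart τ.parts (b + 1) := by
  by_contra! hlt
  have h₁ := (τ.lt_conjugatePart_iff c _).1 hlt
  have h₂ := τ.lt_conjugatePart_iff b (conjugatePart τ.parts (b + 1))
  omega

/-- The partitions whose diagram fits in the rectangle with `n` rows and `m` columns. -/
def box (m n : ℕ) : Set NatPartition := {τ | τ.length ≤ n ∧ τ.parts 0 ≤ m}

variable {m n : ℕ}

theorem parts_le_of_mem_box {τ : NatPartition} (h : τ ∈ box m n) (k : ℕ) : τ.parts k ≤ m :=
  (τ.antitone (Nat.zero_le k)).trans h.2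

theorem parts_eq_zero_of_mem_box {τ : NatPartition} (h : τ ∈ box m n) {k : ℕ} (hk : n ≤ k) :
    τ.parts k = 0 :=
  Nat.eq_zero_of_le_zero ((τ.antitone hk).trans ((τ.length_le_iff n).1 h.1).le)

theorem conjugatePart_le_of_mem_box {τ : NatPartition} (h : τ ∈ box m n) (b : ℕ) :
    conjugatePart τ.parts (b + 1) ≤ n := by
  have h₁ := parts_eq_zero_of_mem_box h le_rfl
  have h₂ := τ.lt_conjugatePart_iff b n
  omega

theorem size_eq_sum_of_mem_box {τ : NatPartition} (h : τ ∈ box m n) :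
    τ.size = ∑ k : Fin n, τ.parts k := by
  rw [size, finsum_eq_sum_of_support_subset (s := Finset.range n), Finset.sum_range]
  intro k hk
  by_contra hkn
  exact hk (parts_eq_zero_of_mem_box h (by simpa using hkn))

theorem finite_box (m n : ℕ) : (box m n).Finite := by
  refine Set.Finite.of_injOn (t := Set.univ)
    (f := fun τ : NatPartition => fun k : Fin n => Fin.ofNat (m + 1) (τ.parts k))
    (fun _ _ => Set.mem_univ _) ?_ Set.finite_univ
  intro σ hσ τ hτ h
  refine ext_parts (_root_.funext fun k => ?_)
  by_cases hk : k < n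
  · have := congrArg Fin.val (congrFun h ⟨k, hk⟩)
    simpa [Nat.mod_eq_of_lt (Nat.lt_succ_of_le (parts_le_of_mem_box hσ k)),
      Nat.mod_eq_of_lt (Nat.lt_succ_of_le (parts_le_of_mem_box hτ k))] using this
  · rw [parts_eq_zero_of_mem_box hσ (not_lt.1 hk), parts_eq_zero_of_mem_box hτ (not_lt.1 hk)]

noncomputable instance : Fintype (box m n) := (finite_box m n).fintype

/-- The positions of the steps along the columns (left summand) and along the rows (right summand)
in the boundary path of `τ` inside its rectangle. -/
noncomputable def boundaryFun (τ : box m n) : Fin m ⊕ Fin n → Fin (m + n) :=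
  Sum.elim
    (fun b => ⟨m - 1 - b + conjugatePart τ.1.parts (b + 1), by
      have := conjugatePart_le_of_mem_box τ.2 b
      omega⟩)
    (fun k => ⟨m + k - τ.1.parts k, by omega⟩)

theorem boundaryFun_inl_lt_inr_iff (τ : box m n) (b : Fin m) (k : Fin n) :
    boundaryFun τ (Sum.inl b) < boundaryFun τ (Sum.inr k) ↔ τ.1.parts k ≤ b := by
  have h₁ := τ.1.lt_conjugatePart_iff b k
  have h₂ := parts_le_of_mem_box τ.2 k
  simp only [boundaryFun, Sum.elim_inl, Sum.elim_inr, Fin.mk_lt_mk]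
  omega

theorem boundaryFun_inl_ne_inr (τ : box m n) (b : Fin m) (k : Fin n) :
    boundaryFun τ (Sum.inl b) ≠ boundaryFun τ (Sum.inr k) := by
  have h₁ := τ.1.lt_conjugatePart_iff b k
  have h₂ := parts_le_of_mem_box τ.2 k
  simp only [boundaryFun, Sum.elim_inl, Sum.elim_inr, ne_eq, Fin.mk.injEq]
  omega

theorem strictAnti_boundaryFun_inl (τ : box m n) :
    StrictAnti fun b : Fin m => boundaryFun τ (Sum.inl b) := by
  intro b c hbc
  have h := τ.1.conjugatePart_antitone (Fin.le_def.1 hbc.le)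
  simp only [boundaryFun, Sum.elim_inl, Fin.mk_lt_mk]
  omega

theorem strictMono_boundaryFun_inr (τ : box m n) :
    StrictMono fun k : Fin n => boundaryFun τ (Sum.inr k) := by
  intro j k hjk
  have h₁ := τ.1.antitone (Fin.le_def.1 hjk.le)
  have h₂ := parts_le_of_mem_box τ.2 j
  simp only [boundaryFun, Sum.elim_inr, Fin.mk_lt_mk]
  omega

theorem boundaryFun_injective (τ : box m n) : Function.Injective (boundaryFun τ) := by
  rintro (b | j) (c | k) h
  · rw [(strictAnti_boundaryFun_inl τ).injective h]
  · exact absurd h (boundaryFun_inl_ne_inr τ b k)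
  · exact absurd h.symm (boundaryFun_inl_ne_inr τ c j)
  · rw [(strictMono_boundaryFun_inr τ).injective h]

/-- `boundaryFun τ` as a bijection. -/
noncomputable def boundaryEquiv (τ : box m n) : Fin m ⊕ Fin n ≃ Fin (m + n) :=
  Equiv.ofBijective (boundaryFun τ)
    ((Fintype.bijective_iff_injective_and_card _).2 ⟨boundaryFun_injective τ, by simp⟩)

@[simp]
theorem boundaryEquiv_apply (τ : box m n) (x : Fin m ⊕ Fin n) :
    boundaryEquiv τ x = boundaryFun τ x := rfl

/-- The boundary bijection of the empty partition. -/
def emptyBoundary (m n : ℕ) : Fin m ⊕ Fin n ≃ Fin (m + n) :=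
  (Equiv.sumCongr Fin.revPerm (Equiv.refl _)).trans finSumFinEquiv

theorem emptyBoundary_inl (b : Fin m) : (emptyBoundary m n (Sum.inl b) : ℕ) = m - 1 - b := by
  simp [emptyBoundary, Fin.val_rev]
  omega

theorem emptyBoundary_inr (k : Fin n) : (emptyBoundary m n (Sum.inr k) : ℕ) = m + k := by
  simp [emptyBoundary]

theorem prod_ite_le_one_neg_one {t : ℕ} (ht : t ≤ m) :
    (∏ b : Fin m, if t ≤ (b : ℕ) then (1 : ℤˣ) else -1) = (-1) ^ t := by
  have h : ∀ b : Fin m, (if t ≤ (b : ℕ) then (1 : ℤˣ) else -1) = if (b : ℕ) < t then -1 else 1 :=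
    fun b => by split_ifs <;> first | rfl | omega
  simp_rw [h]
  rw [Fin.prod_univ_eq_prod_range (fun b => if b < t then (-1 : ℤˣ) else 1),
    ← Finset.prod_filter, Finset.prod_const]
  congr 1
  have : (Finset.range m).filter (· < t) = Finset.range t := by
    ext b
    simp only [Finset.mem_filter, Finset.mem_range]
    omega
  rw [this, Finset.card_range]

theorem sign_boundary (τ : box m n) :
    Equiv.Perm.sign ((boundaryEquiv τ).trans (emptyBoundary m n).symm) = (-1) ^ τ.1.size := by
  have hconj : Equiv.Perm.sign ((boundaryEquiv τ).trans (emptyBoundary m n).symm) =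
      Equiv.Perm.sign ((emptyBoundary m n).symm.trans (boundaryEquiv τ)) := by
    rw [← Equiv.Perm.sign_permCongr (emptyBoundary m n)]
    congr 1
    ext x
    simp [Equiv.permCongr_apply]
  have hl (b : Fin m) : (emptyBoundary m n).symm (Fin.castAdd n b) = Sum.inl b.rev := by
    rw [Equiv.symm_apply_eq]
    simp [emptyBoundary]
  have hr (k : Fin n) : (emptyBoundary m n).symm (Fin.natAdd m k) = Sum.inr k := by
    rw [Equiv.symm_apply_eq]
    simp [emptyBoundary]
  have hIio (j : Fin (m + n)) : Finset.Iio j = Finset.univ.filter (· < j) := by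
    ext; simp
  rw [hconj, Equiv.Perm.sign_eq_prod_prod_Iio]
  simp_rw [hIio, Finset.prod_filter]
  simp only [Fin.prod_univ_add, Equiv.trans_apply, hl, hr, boundaryEquiv_apply]
  rw [Finset.prod_eq_one, one_mul, size_eq_sum_of_mem_box τ.2, ← Finset.prod_pow_eq_pow_sum]
  · refine Finset.prod_congr rfl fun k _ => ?_
    rw [← prod_ite_le_one_neg_one (parts_le_of_mem_box τ.2 k), Finset.prod_eq_one (s := Finset.univ)
      (f := fun j : Fin n => ite (Fin.natAdd m j < Fin.natAdd m k) _ _), mul_one,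
      ← Equiv.prod_comp Fin.revPerm fun b : Fin m => if τ.1.parts k ≤ b then (1 : ℤˣ) else -1]
    · refine Finset.prod_congr rfl fun b _ => ?_
      have : Fin.castAdd n b < Fin.natAdd m k := Fin.lt_def.2 (by simp; omega)
      simp only [this, if_true, boundaryFun_inl_lt_inr_iff, Fin.revPerm_apply]
    · intro j _
      split_ifs with h₁ h₂
      · rfl
      · exact absurd (strictMono_boundaryFun_inr τ (by simpa using h₁)) h₂
      · rfl
  · intro b _
    rw [Finset.prod_eq_one, Finset.prod_eq_one, one_mul]
    · intro k _
      rw [if_neg]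
      simp [Fin.lt_def]
      omega
    · intro c _
      split_ifs with h₁ h₂
      · rfl
      · refine absurd (strictAnti_boundaryFun_inl τ ?_) h₂
        exact Fin.rev_lt_rev.2 (Fin.lt_def.2 h₁)
      · rfl

theorem boundaryFun_inr_range_injective (σ τ : box m n)
    (h : Set.range (fun k : Fin n => boundaryFun σ (Sum.inr k)) =
      Set.range fun k : Fin n => boundaryFun τ (Sum.inr k)) : σ = τ := by
  have hfun := ((strictMono_boundaryFun_inr σ).range_inj (strictMono_boundaryFun_inr τ)).1 h
  refine Subtype.ext (ext_parts (_root_.funext fun k => ?_))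
  by_cases hk : k < n
  · have h₁ := congrArg Fin.val (congrFun hfun ⟨k, hk⟩)
    have h₂ := parts_le_of_mem_box σ.2 k
    have h₃ := parts_le_of_mem_box τ.2 k
    simp only [boundaryFun, Sum.elim_inr] at h₁
    omega
  · rw [parts_eq_zero_of_mem_box σ.2 (not_lt.1 hk), parts_eq_zero_of_mem_box τ.2 (not_lt.1 hk)]

theorem le_of_strictMono_fin {f : Fin n → Fin (m + n)} (hf : StrictMono f) {j k : Fin n}
    (hjk : j ≤ k) : (f j : ℕ) + k ≤ f k + j := by
  obtain ⟨j, hj⟩ := j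
  obtain ⟨k, hk⟩ := k
  replace hjk : j ≤ k := hjk
  induction k, hjk using Nat.le_induction with
  | base => rfl
  | succ k hjk ih =>
    have h₁ := ih (by omega)
    have h₂ : (f ⟨k, by omega⟩ : ℕ) < f ⟨k + 1, hk⟩ := hf (by simp [Fin.lt_def])
    change (f ⟨j, hj⟩ : ℕ) + k ≤ f ⟨k, by omega⟩ + j at h₁
    change (f ⟨j, hj⟩ : ℕ) + (k + 1) ≤ f ⟨k + 1, hk⟩ + j
    omega

/-- The partition in the rectangle whose boundary steps along the rows are at the positions `f`. -/
def ofStrictMono (f : Fin n → Fin (m + n)) (hf : StrictMono f) : NatPartition where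
  parts k := if h : k < n then m + k - f ⟨k, h⟩ else 0
  antitone := by
    intro j k hjk
    dsimp only
    split_ifs with h₁ h₂
    · have := le_of_strictMono_fin hf (j := ⟨j, h₂⟩) (k := ⟨k, h₁⟩) hjk
      simp only at this
      omega
    · omega
    · omega
    · rfl
  eventually_zero := ⟨n, fun j hj => by simp [not_lt.2 hj]⟩

theorem ofStrictMono_mem_box (f : Fin n → Fin (m + n)) (hf : StrictMono f) :
    ofStrictMono f hf ∈ box m n := by
  refine ⟨(length_le_iff _ _).2 (by simp [ofStrictMono]), ?_⟩
  simp only [ofStrictMono]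
  split_ifs <;> omega

theorem boundaryFun_ofStrictMono_inr (f : Fin n → Fin (m + n)) (hf : StrictMono f) (k : Fin n) :
    boundaryFun ⟨ofStrictMono f hf, ofStrictMono_mem_box f hf⟩ (Sum.inr k) = f k := by
  have h := le_of_strictMono_fin hf (j := k) (k := ⟨n - 1, Nat.sub_one_lt_of_lt k.2⟩)
    (Fin.le_def.2 (Nat.le_sub_one_of_lt k.2))
  have h' := (f ⟨n - 1, by omega⟩).2
  ext
  simp only [boundaryFun, ofStrictMono, Sum.elim_inr, Fin.is_lt, dif_pos, Fin.eta] at h ⊢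
  omega

/-- Permutations are uniquely a boundary permutation times a block permutation. -/
theorem bijective_boundary_mul_sumCongr (m n : ℕ) :
    Function.Bijective fun p : box m n × Equiv.Perm (Fin m) × Equiv.Perm (Fin n) =>
      (Equiv.sumCongr p.2.1 p.2.2).trans
        ((boundaryEquiv p.1).trans (emptyBoundary m n).symm) := by
  constructor
  · rintro ⟨σ, α, β⟩ ⟨τ, γ, δ⟩ h
    have happ (x : Fin m ⊕ Fin n) :
        boundaryFun σ (Equiv.sumCongr α β x) = boundaryFun τ (Equiv.sumCongr γ δ x) := by
      have := Equiv.congr_fun h x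
      simpa only [Equiv.trans_apply, EmbeddingLike.apply_eq_iff_eq, boundaryEquiv_apply] using this
    obtain rfl : σ = τ := by
      refine boundaryFun_inr_range_injective σ τ ?_
      rw [← β.surjective.range_comp, ← δ.surjective.range_comp fun k => boundaryFun τ (Sum.inr k)]
      exact congrArg Set.range (_root_.funext fun k => happ (Sum.inr k))
    have hinj (x : Fin m ⊕ Fin n) := boundaryFun_injective σ (happ x)
    have hα : α = γ := Equiv.ext fun b => Sum.inl_injective (hinj (Sum.inl b))
    have hβ : β = δ := Equiv.ext fun k => Sum.inr_injective (hinj (Sum.inr k))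
    rw [hα, hβ]
  · intro π
    let e := π.trans (emptyBoundary m n)
    let J : Finset (Fin (m + n)) := Finset.univ.image fun k : Fin n => e (Sum.inr k)
    have hJ : J.card = n := by
      refine (Finset.card_image_of_injective _ (e.injective.comp Sum.inr_injective)).trans ?_
      simp
    let f := J.orderEmbOfFin hJ
    let τ : box m n := ⟨ofStrictMono f f.strictMono, ofStrictMono_mem_box f f.strictMono⟩
    have hmaps : Set.MapsTo (e.trans (boundaryEquiv τ).symm) (Set.range Sum.inl)
        (Set.range Sum.inl) := by
      rintro _ ⟨b, rfl⟩
      rcases hx : (e.trans (boundaryEquiv τ).symm) (Sum.inl b) with c | k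
      · exact ⟨c, rfl⟩
      · exfalso
        rw [Equiv.trans_apply, Equiv.symm_apply_eq, boundaryEquiv_apply,
          boundaryFun_ofStrictMono_inr] at hx
        have hmem : e (Sum.inl b) ∈ J := hx ▸ J.orderEmbOfFin_mem hJ k
        obtain ⟨j, -, hj⟩ := Finset.mem_image.1 hmem
        exact Sum.inr_ne_inl (e.injective hj)
    obtain ⟨⟨α, β⟩, hαβ⟩ := Equiv.Perm.mem_sumCongrHom_range_of_perm_mapsTo_inl hmaps
    refine ⟨⟨τ, α, β⟩, ?_⟩
    have hαβ : Equiv.sumCongr α β = e.trans (boundaryEquiv τ).symm := hαβ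
    ext x
    simp [hαβ, e]

/-- Laplace expansion along the first `m` rows, indexed by the partitions in a rectangle. -/
theorem det_eq_sum_box {R : Type*} [CommRing R] (A : Matrix (Fin (m + n)) (Fin (m + n)) R) :
    A.det = ∑ τ : box m n, (-1) ^ τ.1.size *
      (Matrix.of fun i j : Fin n =>
        A (emptyBoundary m n (Sum.inr i)) (boundaryFun τ (Sum.inr j))).det *
      (Matrix.of fun i j : Fin m =>
        A (emptyBoundary m n (Sum.inl i)) (boundaryFun τ (Sum.inl j))).det := by
  rw [← Matrix.det_submatrix_equiv_self (emptyBoundary m n), ← Matrix.det_transpose,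
    Matrix.det_apply', ← (bijective_boundary_mul_sumCongr m n).sum_comp, Fintype.sum_prod_type]
  refine Finset.sum_congr rfl fun τ _ => ?_
  rw [← Matrix.det_transpose, Matrix.det_apply', ← Matrix.det_transpose, Matrix.det_apply',
    mul_assoc, Finset.sum_mul_sum, Finset.sum_comm, Fintype.sum_prod_type, Finset.mul_sum]
  refine Finset.sum_congr rfl fun α _ => ?_
  rw [Finset.mul_sum]
  refine Finset.sum_congr rfl fun β _ => ?_
  have hsign : Equiv.Perm.sign ((Equiv.sumCongr α β).trans
      ((boundaryEquiv τ).trans (emptyBoundary m n).symm)) =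
      (-1) ^ τ.1.size * (Equiv.Perm.sign α * Equiv.Perm.sign β) := by
    rw [Equiv.Perm.sign_trans, sign_boundary, ← Equiv.Perm.sign_sumCongr]
  simp only [hsign, Fintype.prod_sum_type, Matrix.transpose_apply, Matrix.submatrix_apply,
    Equiv.trans_apply, Equiv.apply_symm_apply, Equiv.sumCongr_apply, Sum.map_inl, Sum.map_inr,
    boundaryEquiv_apply, Matrix.of_apply]
  push_cast
  ring

end NatPartition

theorem hInt_of_neg {N : ℕ} {k : ℤ} (h : k < 0) : hInt N k = 0 := if_neg (not_le.2 h)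

theorem hInt_zero (N : ℕ) : hInt N 0 = 1 := by simp [hInt]

/-- A corner which is upper unitriangular below zeros does not change the determinant. -/
theorem det_padded {R : Type*} [CommRing R] (A : ℕ → ℕ → R) (n p : ℕ)
    (h₀ : ∀ i j, n ≤ i → j < i → A i j = 0) (h₁ : ∀ i, n ≤ i → A i i = 1) :
    (Matrix.of fun i j : Fin (n + p) => A i j).det = (Matrix.of fun i j : Fin n => A i j).det := by
  induction p with
  | zero => rfl
  | succ p ih =>
    rw [← ih]
    change (Matrix.of fun i j : Fin (n + p + 1) => A i j).det = _
    rw [Matrix.det_succ_row _ (Fin.last _), Fin.sum_univ_castSucc, Finset.sum_eq_zero]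
    · simp [h₁ (n + p) (by omega), Matrix.submatrix, ← two_mul, pow_mul]
    · intro j _
      simp [h₀ (n + p) j (by omega) j.2]

/-- A square matrix with a zero block touching the diagonal has determinant zero. -/
theorem det_eq_zero_of_corner {R : Type*} [CommRing R] {L : ℕ} (A : Matrix (Fin L) (Fin L) R)
    (k : Fin L) (h : ∀ i j, k ≤ i → j ≤ k → A i j = 0) : A.det = 0 := by
  rw [A.twoBlockTriangular_det (· < k) fun i hi j hj => h i j (not_lt.1 hi) (le_of_lt hj),
    Matrix.det_eq_zero_of_column_eq_zero (A := A.toSquareBlockProp fun i => ¬ i < k)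
      ⟨k, lt_irrefl k⟩ fun i => h i k (not_lt.1 i.2) le_rfl, mul_zero]

/-- The Jacobi–Trudi determinant of `ν/σ` vanishes if `σ` has a nonzero part beyond `ν`. -/
theorem jacobiTrudi_eq_zero {N L n : ℕ} {nu sg : ℕ → ℕ} (hnu : ∀ j, n ≤ j → nu j = 0)
    (hsg : ∀ j, j ≤ n → 0 < sg j) (hn : n < L) :
    (Matrix.of fun i j : Fin L => hInt N ((nu i : ℤ) - sg j - (i : ℕ) + (j : ℕ))).det = 0 := by
  refine det_eq_zero_of_corner _ ⟨n, hn⟩ fun i j hi hj => hInt_of_neg ?_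
  rw [Fin.le_def] at hi hj
  have h₁ := hnu i hi
  have h₂ := hsg j hj
  simp only at hi hj
  omega

/-- Padding the partitions with zeros does not change the Jacobi–Trudi determinant. -/
theorem jacobiTrudi_padded {N n p : ℕ} {nu sg : ℕ → ℕ} (hnu : ∀ j, n ≤ j → nu j = 0)
    (hsg : ∀ j, n ≤ j → sg j = 0) :
    (Matrix.of fun i j : Fin (n + p) => hInt N ((nu i : ℤ) - sg j - (i : ℕ) + (j : ℕ))).det =
      (Matrix.of fun i j : Fin n => hInt N ((nu i : ℤ) - sg j - (i : ℕ) + (j : ℕ))).det := by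
  refine det_padded (fun i j => hInt N ((nu i : ℤ) - sg j - (i : ℕ) + (j : ℕ))) n p
    (fun i j hi hj => hInt_of_neg ?_) fun i hi => ?_
  · have := hnu i hi
    omega
  · simp [hnu i hi, hsg i hi, hInt_zero]

theorem skewTerm_eq_zero_of_notMem_box {m n N M : ℕ} {lam mu : ℕ → ℕ}
    (hlam : ∀ j, n ≤ j → lam j = 0) (hmu : ∀ j, m ≤ j → mu j = 0) {τ : NatPartition}
    (hτ : τ ∉ NatPartition.box m n) : skewTerm m n N M lam mu τ = 0 := by
  rcases not_and_or.1 hτ with h | h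
  · have hpos : 0 < τ.parts n := Nat.pos_of_ne_zero fun h₀ => h ((τ.length_le_iff n).2 h₀)
    rw [skewTerm, jacobiTrudi_eq_zero hlam (fun j hj => hpos.trans_le (τ.antitone hj)) (by omega),
      map_zero, mul_zero, zero_mul]
  · rw [skewTerm, jacobiTrudi_eq_zero (sg := fun j => conjugatePart τ.parts (j + 1)) hmu
      (fun j hj => (τ.lt_conjugatePart_iff j 0).2 (by omega)) (by omega), map_zero, mul_zero]

theorem skewTerm_eq_of_mem_box {m n N M : ℕ} {lam mu : ℕ → ℕ}
    (hlam : ∀ j, n ≤ j → lam j = 0) (hmu : ∀ j, m ≤ j → mu j = 0) {τ : NatPartition}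
    (hτ : τ ∈ NatPartition.box m n) : skewTerm m n N M lam mu τ =
      (-1) ^ τ.size *
        (Matrix.of fun i j : Fin n =>
          rename Sum.inl (hInt N ((lam i : ℤ) - τ.parts j - (i : ℕ) + (j : ℕ)))).det *
        (Matrix.of fun i j : Fin m => rename Sum.inr
          (hInt M ((mu i : ℤ) - conjugatePart τ.parts ((j : ℕ) + 1) - (i : ℕ) + (j : ℕ)))).det := by
  rw [skewTerm, jacobiTrudi_padded hlam fun j hj => NatPartition.parts_eq_zero_of_mem_box hτ hj,
    jacobiTrudi_padded (sg := fun j => conjugatePart τ.parts (j + 1)) hmu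
      fun j hj => τ.conjugatePart_eq_zero_of_le (hτ.2.trans hj), AlgHom.map_det, AlgHom.map_det]
  rfl

/-- Let `λ = (λ₁ ≥ … ≥ λ_n ≥ 0)`, `μ = (μ₁ ≥ … ≥ μ_m ≥ 0)` be partitions
and `x = (x₁,…,x_N)`, `y = (y₁,…,y_M)` disjoint variable sets.  Let `Mmat` be the
`(m+n) × (m+n)` matrix with entries `h_{μ_{m+1-i} + i - j}(y)` in rows `1 ≤ i ≤ m` and
`h_{λ_{i-m} - (i-m) + (j-m)}(x)` in rows `m < i ≤ m+n`.  Then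
`det(Mmat) = Σ_τ (-1)^{|τ|} s_{λ/τ}(x) · s_{μ/τ'}(y)`, where the sum ranges over all
partitions `τ` with at most `n` parts each of size at most `m`; moreover the same
identity holds with the sum ranging over all partitions `τ` (the additional terms all
vanish, so the sum has finite support). -/
theorem statement9 (m n N M : ℕ) (lam mu : ℕ → ℕ)
    (hlam_anti : Antitone lam) (hlam_len : ∀ j, n ≤ j → lam j = 0)
    (hmu_anti : Antitone mu) (hmu_len : ∀ j, m ≤ j → mu j = 0)
    (Mmat : Matrix (Fin (m + n)) (Fin (m + n)) (MvPolynomial (Fin N ⊕ Fin M) ℤ))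
    (hMtop : ∀ (i j : Fin (m + n)), (i : ℕ) < m → Mmat i j =
      rename Sum.inr (hInt M ((mu (m - 1 - (i : ℕ)) : ℤ) + (i : ℕ) - (j : ℕ))))
    (hMbot : ∀ (i j : Fin (m + n)), m ≤ (i : ℕ) → Mmat i j =
      rename Sum.inl (hInt N ((lam ((i : ℕ) - m) : ℤ) - (i : ℕ) + (j : ℕ)))) :
    (Matrix.det Mmat =
        ∑ᶠ τ ∈ {τ : NatPartition | τ.length ≤ n ∧ τ.parts 0 ≤ m},
          skewTerm m n N M lam mu τ) ∧
    Matrix.det Mmat = ∑ᶠ τ : NatPartition, skewTerm m n N M lam mu τ := by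
  have hdet : Matrix.det Mmat = ∑ᶠ τ ∈ NatPartition.box m n, skewTerm m n N M lam mu τ := by
    rw [← finsum_set_coe_eq_finsum_mem, finsum_eq_sum_of_fintype, NatPartition.det_eq_sum_box]
    refine Finset.sum_congr rfl fun τ _ => ?_
    rw [skewTerm_eq_of_mem_box hlam_len hmu_len τ.2]
    congr 2
    · congr 2
      ext i j : 2
      have h := NatPartition.parts_le_of_mem_box τ.2 j
      rw [hMbot _ _ (by simp [NatPartition.emptyBoundary_inr]), NatPartition.emptyBoundary_inr,
        Nat.add_sub_cancel_left]
      congr 2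
      simp only [NatPartition.boundaryFun, Sum.elim_inr]
      omega
    · congr 1
      ext i j : 2
      rw [hMtop _ _ (by rw [NatPartition.emptyBoundary_inl]; omega),
        NatPartition.emptyBoundary_inl, show m - 1 - (m - 1 - (i : ℕ)) = i by omega]
      congr 2
      simp only [NatPartition.boundaryFun, Sum.elim_inl]
      omega
  refine ⟨hdet, hdet.trans ?_⟩
  rw [← finsum_mem_univ (skewTerm m n N M lam mu)]
  refine finsum_mem_inter_support_eq' _ _ _ fun τ hτ => iff_of_true ?_ (Set.mem_univ τ)
  by_contra h
  exact hτ (skewTerm_eq_zero_of_notMem_box hlam_len hmu_len h)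
end
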